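/- arXiv:1010.4692 — 4 statements merged into one kernel-verified Lean document; each statement's English description precedes it below -/
import Mathlib

section
/- Let I ⊆ S = K[x_1,…,x_n] be a monomial ideal with Ass(S/I) = {P_1,…,P_s}. Then sdepth_S(I) ≤ min{ sdepth_S(P_i) : 1 ≤ i ≤ s }. -/
open MvPolynomial

/-- The Stanley space `u·K[Z]` inside the polynomial ring `K[x_i : i ∈ σ]`:
the `K`-span of all monomials `x^(u+v)` with `supp v ⊆ Z`. -/
noncomputable def stanleySpace (K : Type*) [Field K] {σ : Type*} (u : σ →₀ ℕ) (Z : Set σ) :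
    Submodule K (MvPolynomial σ K) :=
  Submodule.span K
    ((fun v : σ →₀ ℕ => (monomial (u + v) (1 : K) : MvPolynomial σ K)) ''
      {v | (v.support : Set σ) ⊆ Z})

/-- `(u, Z)` (indexed by a finite type `ι`) is a Stanley decomposition of the monomial
ideal `I`: the Stanley spaces `x^(u i)·K[Z i]` are independent and their (direct) sum is `I`
as a `K`-vector space.  (Inside the polynomial ring each Stanley space is automatically a
free `K[Z]`-module.) -/
def IsStanleyDecompOfIdeal {K σ : Type*} [Field K] {ι : Type} [Fintype ι]
    (I : Ideal (MvPolynomial σ K)) (u : ι → (σ →₀ ℕ)) (Z : ι → Finset σ) : Prop :=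
  iSupIndep (fun i => stanleySpace K (u i) (Z i)) ∧
    (⨆ i, stanleySpace K (u i) (Z i)) = Submodule.restrictScalars K I

/-- The Stanley depth of a monomial ideal `I`: the largest `d` such that there is a Stanley
decomposition of `I` all of whose Stanley spaces `u_i K[Z_i]` satisfy `|Z_i| ≥ d`. -/
noncomputable def sdepthIdeal {K σ : Type*} [Field K] (I : Ideal (MvPolynomial σ K)) : ℕ :=
  sSup {d | ∃ (ι : Type) (_ : Fintype ι) (_ : Nonempty ι) (u : ι → (σ →₀ ℕ))
    (Z : ι → Finset σ), IsStanleyDecompOfIdeal I u Z ∧ ∀ i, d ≤ (Z i).card}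

/-- `(u, Z)` is a Stanley decomposition of `S/I`:  each Stanley space `x^(u i)·K[Z i]` meets
`I` trivially (equivalently, its image in `S/I` is a free `K[Z i]`-module), the images of the
Stanley spaces in `S/I` are independent, and they sum to `S/I`. -/
def IsStanleyDecompOfQuotient {K σ : Type*} [Field K] {ι : Type} [Fintype ι]
    (I : Ideal (MvPolynomial σ K)) (u : ι → (σ →₀ ℕ)) (Z : ι → Finset σ) : Prop :=
  (∀ i, Disjoint (stanleySpace K (u i) (Z i)) (Submodule.restrictScalars K I)) ∧
    iSupIndep (fun i =>
      (stanleySpace K (u i) (Z i)).map (Ideal.Quotient.mkₐ K I).toLinearMap) ∧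
    (⨆ i, (stanleySpace K (u i) (Z i)).map (Ideal.Quotient.mkₐ K I).toLinearMap) = ⊤

/-- The Stanley depth of `S/I` for a monomial ideal `I`. -/
noncomputable def sdepthQuot {K σ : Type*} [Field K] (I : Ideal (MvPolynomial σ K)) : ℕ :=
  sSup {d | ∃ (ι : Type) (_ : Fintype ι) (_ : Nonempty ι) (u : ι → (σ →₀ ℕ))
    (Z : ι → Finset σ), IsStanleyDecompOfQuotient I u Z ∧ ∀ i, d ≤ (Z i).card}

/-- A monomial ideal: an ideal generated by monomials. -/
def IsMonomialIdeal {K σ : Type*} [Field K] (I : Ideal (MvPolynomial σ K)) : Prop :=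
  ∃ A : Set (σ →₀ ℕ), I = Ideal.span ((fun a => (monomial a (1 : K) : MvPolynomial σ K)) '' A)

/-- The (exponents of the) minimal monomial generators of a monomial ideal `I`:
monomials in `I` that are not proper multiples of monomials in `I`. -/
def minimalGenerators {K σ : Type*} [Field K] (I : Ideal (MvPolynomial σ K)) :
    Set (σ →₀ ℕ) :=
  {a | (monomial a (1 : K) : MvPolynomial σ K) ∈ I ∧
    ∀ b < a, (monomial b (1 : K) : MvPolynomial σ K) ∉ I}

/-- The depth (w.r.t. the maximal graded ideal `m = (x_1,…,x_n)`) of a module `M` over the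
polynomial ring: the maximal length of a regular sequence on `M` consisting of elements
of `m`. -/
noncomputable def mdepth (K σ : Type*) [Field K] (M : Type*) [AddCommGroup M]
    [Module (MvPolynomial σ K) M] : ℕ :=
  sSup {k | ∃ rs : List (MvPolynomial σ K), rs.length = k ∧
    (∀ r ∈ rs, r ∈ Ideal.span (Set.range (X : σ → MvPolynomial σ K))) ∧
    RingTheory.Sequence.IsRegular M rs}

/-- The height of a prime ideal: the height of the corresponding point
of the prime spectrum, i.e. the supremum of lengths of chains of primes below it. -/
noncomputable def primeHt {R : Type*} [CommRing R] (P : Ideal R) (hP : P.IsPrime) : ℕ∞ :=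
  Order.height (⟨P, hP⟩ : PrimeSpectrum R)

/-- Polynomials whose monomials all lie in `A`. -/
def suppIn (K : Type*) [Field K] {σ : Type*} (A : Set (σ →₀ ℕ)) :
    Submodule K (MvPolynomial σ K) where
  carrier := {p | ∀ m, p.coeff m ≠ 0 → m ∈ A}
  zero_mem' := by intro m hm; simp at hm
  add_mem' := by
    intro p q hp hq m hm
    by_cases h : p.coeff m = 0
    · apply hq m
      intro h'
      simp [h, h'] at hm
    · exact hp m h
  smul_mem' := by
    intro c p hp m hm
    apply hp m
    intro h
    simp [h] at hm

theorem mem_suppIn {K : Type*} [Field K] {σ : Type*} {A : Set (σ →₀ ℕ)} {p : MvPolynomial σ K} :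
    p ∈ suppIn K A ↔ ∀ m, p.coeff m ≠ 0 → m ∈ A := Iff.rfl

theorem monomial_mem_suppIn {K : Type*} [Field K] {σ : Type*} {A : Set (σ →₀ ℕ)} {a : σ →₀ ℕ}
    (c : K) (ha : a ∈ A) : monomial a c ∈ suppIn K A := by
  classical
  intro m hm
  rw [coeff_monomial] at hm
  split_ifs at hm with h
  · exact h ▸ ha
  · exact absurd rfl hm

theorem suppIn_mono {K : Type*} [Field K] {σ : Type*} {A B : Set (σ →₀ ℕ)} (h : A ⊆ B) :
    suppIn K A ≤ suppIn K B := fun _ hp m hm => h (hp m hm)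

/-- Exponents of the Stanley space. -/
def stSet {σ : Type*} (u : σ →₀ ℕ) (Z : Finset σ) : Set (σ →₀ ℕ) :=
  {m | (∀ k, u k ≤ m k) ∧ ∀ k, k ∉ Z → m k = u k}

theorem stanleySpace_eq {K : Type*} [Field K] {σ : Type*} (u : σ →₀ ℕ) (Z : Finset σ) :
    stanleySpace K u (Z : Set σ) = suppIn K (stSet u Z) := by
  apply le_antisymm
  · unfold stanleySpace
    rw [Submodule.span_le]
    rintro _ ⟨v, hv, rfl⟩
    apply monomial_mem_suppIn
    refine ⟨fun k => by simp, fun k hk => ?_⟩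
    have : v k = 0 := by
      by_contra h
      exact hk (hv (by simpa using h))
    simp [this]
  · intro p hp
    rw [p.as_sum]
    refine Submodule.sum_mem _ fun m hm => ?_
    have hA := hp m (mem_support_iff.1 hm)
    have : monomial m (p.coeff m) = (p.coeff m) • (monomial m (1 : K)) := by
      simp [smul_monomial]
    rw [this]
    refine Submodule.smul_mem _ _ (Submodule.subset_span ⟨m - u, ?_, ?_⟩)
    · intro k hk
      by_contra h
      have := hA.2 k h
      simp [this] at hk
    · have : u + (m - u) = m := by
        ext k
        have := hA.1 k
        simp only [Finsupp.add_apply, Finsupp.tsub_apply]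
        omega
      simp [this]

theorem decomp_iff {K σ : Type*} [Field K] {ι : Type} [Fintype ι]
    (I : Ideal (MvPolynomial σ K)) (M : Set (σ →₀ ℕ))
    (hI : Submodule.restrictScalars K I = suppIn K M)
    (u : ι → (σ →₀ ℕ)) (Z : ι → Finset σ) :
    IsStanleyDecompOfIdeal I u Z ↔
      (∀ i j m, m ∈ stSet (u i) (Z i) → m ∈ stSet (u j) (Z j) → i = j) ∧
      ∀ m, m ∈ M ↔ ∃ i, m ∈ stSet (u i) (Z i) := by
  classical
  unfold IsStanleyDecompOfIdeal
  simp only [stanleySpace_eq, hI]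
  constructor
  · rintro ⟨h1, h2⟩
    refine ⟨fun i j m hi hj => ?_, fun m => ⟨fun hm => ?_, ?_⟩⟩
    · by_contra hij
      have := h1.pairwiseDisjoint hij
      have := Submodule.disjoint_def.1 this (monomial m (1 : K)) (monomial_mem_suppIn _ hi)
        (monomial_mem_suppIn _ hj)
      simp at this
    · have hle : (⨆ i, suppIn K (stSet (u i) (Z i))) ≤
          suppIn K {m | ∃ i, m ∈ stSet (u i) (Z i)} :=
        iSup_le fun i => suppIn_mono fun m hm => ⟨i, hm⟩
      have := hle (h2 ▸ monomial_mem_suppIn (1 : K) hm)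
      exact this m (by simp)
    · rintro ⟨i, hi⟩
      have := (le_iSup (fun i => suppIn K (stSet (u i) (Z i))) i) (monomial_mem_suppIn (1 : K) hi)
      rw [h2] at this
      exact this m (by simp)
  · rintro ⟨h1, h2⟩
    refine ⟨fun i => ?_, le_antisymm (iSup_le fun i => suppIn_mono fun m hm => (h2 m).2 ⟨i, hm⟩) ?_⟩
    · have hle : (⨆ j, ⨆ (_ : j ≠ i), suppIn K (stSet (u j) (Z j))) ≤
          suppIn K {m | ∃ j, j ≠ i ∧ m ∈ stSet (u j) (Z j)} :=
        iSup_le fun j => iSup_le fun hj => suppIn_mono fun m hm => ⟨j, hj, hm⟩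
      refine Disjoint.mono_right hle ?_
      rw [Submodule.disjoint_def]
      intro p hp hq
      ext m
      by_contra hm
      rw [coeff_zero] at hm
      obtain ⟨j, hj, hjm⟩ := hq m hm
      exact hj (h1 _ _ m hjm (hp m hm))
    · intro p hp
      rw [p.as_sum]
      refine Submodule.sum_mem _ fun m hm => ?_
      obtain ⟨i, hi⟩ := (h2 m).1 (hp m (mem_support_iff.1 hm))
      exact (le_iSup (fun i => suppIn K (stSet (u i) (Z i))) i) (monomial_mem_suppIn _ hi)

theorem stSet_colon {σ : Type*} (u v m : σ →₀ ℕ) (Z : Finset σ) :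
    v + m ∈ stSet u Z ↔ (∀ k, k ∉ Z → v k ≤ u k) ∧ m ∈ stSet (u - v) Z := by
  simp only [stSet, Set.mem_setOf_eq, Finsupp.add_apply, Finsupp.tsub_apply]
  constructor
  · rintro ⟨h1, h2⟩
    refine ⟨fun k hk => ?_, fun k => ?_, fun k hk => ?_⟩
    · have := h2 k hk; omega
    · have := h1 k; omega
    · have := h2 k hk; omega
  · rintro ⟨h0, h1, h2⟩
    refine ⟨fun k => ?_, fun k hk => ?_⟩
    · have := h1 k; omega
    · have := h2 k hk; have := h0 k hk; omega

theorem sdepth_le_colon {K σ : Type*} [Field K] [Fintype σ]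
    (I J : Ideal (MvPolynomial σ K)) (M : Set (σ →₀ ℕ)) (v : σ →₀ ℕ)
    (hM : ∀ m, m ∈ M → v + m ∈ M)
    (hI : Submodule.restrictScalars K I = suppIn K M)
    (hJ : Submodule.restrictScalars K J = suppIn K {m | v + m ∈ M}) :
    sdepthIdeal I ≤ sdepthIdeal J := by
  classical
  unfold sdepthIdeal
  apply csSup_le'
  rintro d ⟨ι, _, ⟨i₀⟩, u, Z, hD, hd⟩
  rw [decomp_iff I M hI] at hD
  obtain ⟨h1, h2⟩ := hD
  apply le_csSup
  · refine ⟨Fintype.card σ, ?_⟩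
    rintro e ⟨ι', _, ⟨j⟩, u', Z', -, he⟩
    exact (he j).trans (Finset.card_le_univ _)
  · refine ⟨{i : ι // ∀ k, k ∉ Z i → v k ≤ u i k}, inferInstance, ?_, fun i => u i.1 - v,
      fun i => Z i.1, ?_, fun i => hd i.1⟩
    · have h0 : u i₀ ∈ M := (h2 _).2 ⟨i₀, fun k => le_rfl, fun k _ => rfl⟩
      obtain ⟨i, hi⟩ := (h2 _).1 (hM _ h0)
      exact ⟨⟨i, ((stSet_colon _ _ _ _).1 hi).1⟩⟩
    · rw [decomp_iff J _ hJ]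
      refine ⟨fun i j m hi hj => ?_, fun m => ?_⟩
      · exact Subtype.ext (h1 _ _ (v + m) ((stSet_colon _ _ _ _).2 ⟨i.2, hi⟩)
          ((stSet_colon _ _ _ _).2 ⟨j.2, hj⟩))
      · rw [Set.mem_setOf_eq, h2]
        constructor
        · rintro ⟨i, hi⟩
          obtain ⟨a, b⟩ := (stSet_colon _ _ _ _).1 hi
          exact ⟨⟨i, a⟩, b⟩
        · rintro ⟨i, hi⟩
          exact ⟨i.1, (stSet_colon _ _ _ _).2 ⟨i.2, hi⟩⟩

theorem monomialIdeal_eq {K σ : Type*} [Field K] (I : Ideal (MvPolynomial σ K))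
    (hI : IsMonomialIdeal I) : ∃ M : Set (σ →₀ ℕ),
    (∀ m, m ∈ M → ∀ v, v + m ∈ M) ∧ ∀ p, p ∈ I ↔ ∀ m, p.coeff m ≠ 0 → m ∈ M := by
  obtain ⟨A, rfl⟩ := hI
  refine ⟨{m | ∃ a ∈ A, a ≤ m}, ?_, fun p => ?_⟩
  · rintro m ⟨a, ha, hle⟩ v
    exact ⟨a, ha, hle.trans (by simp)⟩
  · rw [mem_ideal_span_monomial_image]
    simp [mem_support_iff]

theorem coeff_monomial_mul_one {K σ : Type*} [Field K] (b m : σ →₀ ℕ) (f : MvPolynomial σ K) :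
    (monomial b (1 : K) * f).coeff m ≠ 0 ↔ ∃ a, f.coeff a ≠ 0 ∧ m = b + a := by
  classical
  rw [coeff_monomial_mul']
  constructor
  · intro h
    split_ifs at h with hb
    · exact ⟨m - b, by simpa using h, (add_tsub_cancel_of_le hb).symm⟩
    · exact absurd rfl h
  · rintro ⟨a, ha, rfl⟩
    simpa using ha

/-- An associated prime of a monomial ideal is the colon by a monomial. -/
theorem exists_monomial_colon {K : Type*} [Field K] {n : ℕ}
    (I P : Ideal (MvPolynomial (Fin n) K)) (M : Set (Fin n →₀ ℕ))
    (hM : ∀ m, m ∈ M → ∀ v, v + m ∈ M)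
    (hI : ∀ p, p ∈ I ↔ ∀ m, p.coeff m ≠ 0 → m ∈ M) (hP : P.IsPrime)
    (hf : ∃ f, ∀ g, g ∈ P ↔ g * f ∈ I) :
    ∃ v, ∀ g, g ∈ P ↔ ∀ m, g.coeff m ≠ 0 → v + m ∈ M := by
  classical
  have hne : ∃ k, ∃ f, (∀ g, g ∈ P ↔ g * f ∈ I) ∧ f.support.card = k := by
    obtain ⟨f, hf⟩ := hf
    exact ⟨_, f, hf, rfl⟩
  obtain ⟨f, hf, hk⟩ := Nat.find_spec hne
  have hmin : ∀ f', (∀ g, g ∈ P ↔ g * f' ∈ I) → f.support.card ≤ f'.support.card := by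
    intro f' h'
    rw [hk]
    exact Nat.find_min' hne ⟨f', h', rfl⟩
  clear hk
  have hf0 : f ≠ 0 := by
    rintro rfl
    apply hP.ne_top
    rw [Ideal.eq_top_iff_one, hf]
    simp
  let o : MonomialOrder (Fin n) := MonomialOrder.lex
  -- leading monomials of elements of `P` lie in `P`
  have hlead : ∀ g, g ∈ P → g ≠ 0 → monomial (o.degree g) (1 : K) ∈ P := by
    intro g hg hg0
    by_contra hb
    set b := o.degree g with hbdef
    set a := o.degree f with hadef
    set c := f.coeff a with hc
    have hab : b + a ∈ M := by
      apply (hI _).1 ((hf g).1 hg)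
      rw [hbdef, hadef, o.coeff_mul_of_degree_add]
      exact mul_ne_zero (o.leadingCoeff_ne_zero_iff.2 hg0) (o.leadingCoeff_ne_zero_iff.2 hf0)
    have hLT : monomial b (1 : K) * monomial a c ∈ I := by
      rw [monomial_mul, hI]
      intro m hm
      rw [coeff_monomial] at hm
      split_ifs at hm with h
      · exact h ▸ hab
      · exact absurd rfl hm
    have h1 := hmin (monomial b (1 : K) * (f - monomial a c)) (by
      intro q
      have e : q * (monomial b (1 : K) * (f - monomial a c)) =
        (q * monomial b (1 : K)) * f - q * (monomial b (1 : K) * monomial a c) := by ring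
      rw [e, Submodule.sub_mem_iff_left _ (I.mul_mem_left q hLT), ← hf]
      exact ⟨fun h => P.mul_mem_right _ h, fun h => (hP.mem_or_mem h).resolve_right hb⟩)
    have h2 : (monomial b (1 : K) * (f - monomial a c)).support ⊆
        (f.support.erase a).image (fun x => b + x) := by
      intro m hm
      obtain ⟨x, hx, rfl⟩ := (coeff_monomial_mul_one _ _ _).1 (mem_support_iff.1 hm)
      refine Finset.mem_image_of_mem _ (Finset.mem_erase.2 ?_)
      rw [coeff_sub, coeff_monomial] at hx
      have hxa : x ≠ a := by
        rintro rfl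
        simp [hc] at hx
      rw [if_neg hxa.symm, sub_zero] at hx
      exact ⟨hxa, mem_support_iff.2 hx⟩
    have h3 := (Finset.card_le_card h2).trans Finset.card_image_le
    have h4 := Finset.card_erase_lt_of_mem (o.degree_mem_support hf0)
    rw [← hadef] at h4
    omega
  have hmon : ∀ k, ∀ g, g ∈ P → g.support.card = k → ∀ m, g.coeff m ≠ 0 →
      monomial m (1 : K) ∈ P := by
    intro k
    induction k using Nat.strong_induction_on with
    | _ k ih =>
      intro g hg hk m hm
      have hg0 : g ≠ 0 := by rintro rfl; simp at hm
      have hl := hlead g hg hg0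
      by_cases hma : m = o.degree g
      · rw [hma]; exact hl
      set b := o.degree g with hbdef
      have hl' : monomial b (g.coeff b) ∈ P := by
        have := P.mul_mem_left (C (g.coeff b)) hl
        rwa [C_mul_monomial, mul_one] at this
      have hsub : (g - monomial b (g.coeff b)).support ⊆ g.support.erase b := by
        intro x hx
        rw [mem_support_iff, coeff_sub, coeff_monomial] at hx
        have hxa : x ≠ b := by
          rintro rfl
          simp at hx
        rw [if_neg hxa.symm, sub_zero] at hx
        exact Finset.mem_erase.2 ⟨hxa, mem_support_iff.2 hx⟩
      have h4 := Finset.card_erase_lt_of_mem (o.degree_mem_support hg0)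
      refine ih _ ?_ (g - monomial b (g.coeff b)) (P.sub_mem hg hl') rfl m ?_
      · exact hk ▸ (Finset.card_le_card hsub).trans_lt h4
      · rw [coeff_sub, coeff_monomial, if_neg (Ne.symm hma), sub_zero]
        exact hm
  -- some monomial of `f` has colon inside `P`
  have hex : ∃ a ∈ f.support, ∀ m, a + m ∈ M → monomial m (1 : K) ∈ P := by
    by_contra hcon
    push Not at hcon
    choose! w hw1 hw2 using hcon
    have hprod : (∏ a ∈ f.support, monomial (w a) (1 : K)) ∈ P := by
      rw [hf, f.as_sum, Finset.mul_sum]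
      refine Ideal.sum_mem _ fun a ha => ?_
      rw [← Finset.mul_prod_erase _ _ (by simpa using ha), mul_right_comm]
      apply I.mul_mem_right
      rw [monomial_mul, hI]
      intro m hm
      rw [coeff_monomial] at hm
      split_ifs at hm with h
      · rw [← h, add_comm]; exact hw1 a ha
      · exact absurd rfl hm
    obtain ⟨a, ha, h⟩ := (hP.prod_mem_iff).1 hprod
    exact hw2 a ha h
  obtain ⟨a, ha, hsub⟩ := hex
  refine ⟨a, fun g => ⟨fun hg m hm => ?_, fun h => ?_⟩⟩
  · have h1 := hmon _ g hg rfl m hm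
    rw [hf, hI] at h1
    apply h1
    rw [coeff_monomial_mul_one]
    exact ⟨a, mem_support_iff.1 ha, add_comm _ _⟩
  · rw [g.as_sum]
    refine Ideal.sum_mem _ fun m hm => ?_
    have := P.mul_mem_left (C (g.coeff m)) (hsub m (h m (mem_support_iff.1 hm)))
    rwa [C_mul_monomial, mul_one] at this

/-- **Theorem 1.1.** If `I` is a monomial ideal with `Ass(S/I) = {P_1,…,P_s}`, then
`sdepth I ≤ min_i sdepth (P_i)`. -/
theorem sdepth_le_min_sdepth_associatedPrimes {K : Type*} [Field K] {n s : ℕ}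
    (I : Ideal (MvPolynomial (Fin n) K)) (hI : IsMonomialIdeal I)
    (P : Fin s → Ideal (MvPolynomial (Fin n) K))
    (hAss : associatedPrimes (MvPolynomial (Fin n) K)
      ((MvPolynomial (Fin n) K) ⧸ I) = Set.range P) :
    ∀ i, sdepthIdeal I ≤ sdepthIdeal (P i) := by
  intro i
  have hPi : P i ∈ associatedPrimes (MvPolynomial (Fin n) K) ((MvPolynomial (Fin n) K) ⧸ I) := by
    rw [hAss]; exact ⟨i, rfl⟩
  obtain ⟨hprime, x, hx⟩ := isAssociatedPrime_iff.1 (AssociatedPrimes.mem_iff.1 hPi)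
  obtain ⟨f, rfl⟩ := Ideal.Quotient.mk_surjective x
  obtain ⟨M, hM, hIM⟩ := monomialIdeal_eq I hI
  obtain ⟨v, hv⟩ := exists_monomial_colon I (P i) M hM hIM hprime ⟨f, fun g => by
    rw [hx, Submodule.mem_colon_singleton, Submodule.mem_bot]
    exact Ideal.Quotient.eq_zero_iff_mem (I := I) (a := g * f)⟩
  refine sdepth_le_colon I (P i) M v (fun m hm => hM m hm v) ?_ ?_
  · ext p
    exact hIM p
  · ext p
    exact hv p
end

section
/- Let I ⊆ S = K[x_1,…,x_n] be a monomial ideal with Ass(S/I) = {P_1,…,P_s} and set d_i = height(P_i). Let I' = (I, x_{n+1}, x_{n+2}) ⊆ S' = S[x_{n+1}, x_{n+2}]. Then sdepth_{S'}(I') ≤ min{ n + 1 − ⌊d_i/2⌋ : 1 ≤ i ≤ s }. -/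
open MvPolynomial

section Helpers

open MonomialOrder

lemma mon_mem_of_mem {K σ : Type*} [Field K] {I : Ideal (MvPolynomial σ K)}
    (hI : IsMonomialIdeal I) {p : MvPolynomial σ K} (hp : p ∈ I) {m : σ →₀ ℕ}
    (hm : m ∈ p.support) : (monomial m (1 : K)) ∈ I := by
  obtain ⟨A, rfl⟩ := hI
  rw [mem_ideal_span_monomial_image] at hp ⊢
  intro x hx
  have : x = m := by
    have := support_monomial_subset hx
    simpa using this
  subst this
  exact hp x hm

lemma monomial_mem_of_one {K σ : Type*} [Field K] {I : Ideal (MvPolynomial σ K)}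
    {m : σ →₀ ℕ} (h : (monomial m (1 : K)) ∈ I) (c : K) : monomial m c ∈ I := by
  have := I.mul_mem_left (C c) h
  rwa [C_mul_monomial, mul_one] at this

lemma card_support_sub_lt {K σ : Type*} [Field K] (f : MvPolynomial σ K) (b : σ →₀ ℕ)
    (hb : b ∈ f.support) : (f - monomial b (f.coeff b)).support.card < f.support.card := by
  classical
  apply Finset.card_lt_card
  rw [Finset.ssubset_iff_of_subset]
  · refine ⟨b, hb, ?_⟩
    simp
  · intro x hx
    rw [mem_support_iff] at hx ⊢
    intro h0
    apply hx
    rw [coeff_sub, coeff_monomial, h0]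
    split_ifs with h
    · subst h; simp [h0]
    · simp

lemma lead_pow {K : Type*} [Field K] {n : ℕ} {I : Ideal (MvPolynomial (Fin n) K)}
    (hI : IsMonomialIdeal I) (g : MvPolynomial (Fin n) K) (hg : g ≠ 0) :
    ∀ (k : ℕ) (f : MvPolynomial (Fin n) K), f.support.card = k → g * f ∈ I →
      ∃ r : ℕ, (monomial (MonomialOrder.lex.degree g) (1 : K)) ^ r * f ∈ I := by
  intro k
  induction k using Nat.strong_induction_on with
  | _ k ih =>
  intro f hk hgf
  by_cases hf : f = 0
  · exact ⟨0, by simp [hf]⟩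
  set a := MonomialOrder.lex.degree g with ha
  set b := MonomialOrder.lex.degree f with hb
  have hbs : b ∈ f.support := MonomialOrder.lex.degree_mem_support hf
  have hab : monomial (a + b) (1 : K) ∈ I := by
    apply mon_mem_of_mem hI hgf
    rw [ha, hb, ← MonomialOrder.degree_mul hg hf]
    exact MonomialOrder.lex.degree_mem_support (mul_ne_zero hg hf)
  set f2 := f - monomial b (f.coeff b) with hf2
  have hlt := card_support_sub_lt f b hbs
  rw [← hf2] at hlt
  have hle : (monomial a (1 : K) * f2).support.card ≤ f2.support.card := by
    classical
    have hsub : (monomial a (1 : K) * f2).support ⊆ f2.support.image (fun x => a + x) := by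
      intro x hx
      rw [mem_support_iff, coeff_monomial_mul'] at hx
      split_ifs at hx with h
      · rw [Finset.mem_image]
        refine ⟨x - a, ?_, add_tsub_cancel_of_le h⟩
        rw [mem_support_iff]
        simpa using hx
      · exact absurd rfl hx
    exact (Finset.card_le_card hsub).trans Finset.card_image_le
  have hLT : monomial a (1 : K) * monomial b (f.coeff b) ∈ I := by
    rw [monomial_mul, one_mul]
    exact monomial_mem_of_one hab _
  have hg2 : g * (monomial a (1 : K) * f2) ∈ I := by
    have e : g * (monomial a (1 : K) * f2) = monomial a (1 : K) * (g * f)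
        - g * (monomial a (1 : K) * monomial b (f.coeff b)) := by rw [hf2]; ring
    rw [e]
    exact I.sub_mem (I.mul_mem_left _ hgf) (I.mul_mem_left _ hLT)
  obtain ⟨r, hr⟩ := ih _ (by omega) _ rfl hg2
  refine ⟨r + 1, ?_⟩
  have e : monomial a (1 : K) ^ (r + 1) * f = monomial a (1 : K) ^ r * (monomial a (1 : K) * f2)
      + monomial a (1 : K) ^ r * (monomial a (1 : K) * monomial b (f.coeff b)) := by
    rw [hf2]; ring
  rw [e]
  exact I.add_mem hr (I.mul_mem_left _ hLT)

lemma prime_monomial {K : Type*} [Field K] {n : ℕ} {I P : Ideal (MvPolynomial (Fin n) K)}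
    (hI : IsMonomialIdeal I) (hP : P.IsPrime) (f : MvPolynomial (Fin n) K)
    (hf : ∀ g, g ∈ P ↔ g * f ∈ I) :
    ∀ (k : ℕ) (g : MvPolynomial (Fin n) K), g.support.card = k → g ∈ P →
      ∀ m ∈ g.support, monomial m (1 : K) ∈ P := by
  intro k
  induction k using Nat.strong_induction_on with
  | _ k ih =>
  intro g hk hg m hm
  have hg0 : g ≠ 0 := by rintro rfl; simp at hm
  set a := MonomialOrder.lex.degree g with ha
  have haP : monomial a (1 : K) ∈ P := by
    obtain ⟨r, hr⟩ := lead_pow hI g hg0 _ f rfl ((hf g).1 hg)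
    exact hP.mem_of_pow_mem r ((hf _).2 hr)
  by_cases hma : m = a
  · rwa [hma]
  have hlt := card_support_sub_lt g a (MonomialOrder.lex.degree_mem_support hg0)
  refine ih _ (by omega) (g - monomial a (g.coeff a)) rfl
    (P.sub_mem hg (monomial_mem_of_one haP _)) m ?_
  classical
  rw [mem_support_iff, coeff_sub, coeff_monomial, if_neg (Ne.symm hma), sub_zero]
  exact mem_support_iff.1 hm

/-- Structure of associated primes of monomial ideals (the part needed here). -/
lemma assoc_struct {K : Type*} [Field K] {n : ℕ} {I P : Ideal (MvPolynomial (Fin n) K)}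
    (hI : IsMonomialIdeal I)
    (hP : P ∈ associatedPrimes (MvPolynomial (Fin n) K) ((MvPolynomial (Fin n) K) ⧸ I)) :
    ∃ (F : Finset (Fin n)) (w : Fin n →₀ ℕ),
      P = Ideal.span ((X : Fin n → MvPolynomial (Fin n) K) '' (F : Set (Fin n))) ∧
      monomial w (1 : K) ∉ I ∧
      ∀ j ∈ F, monomial (w + Finsupp.single j 1) (1 : K) ∈ I := by
  classical
  obtain ⟨hprime, x, hx⟩ := isAssociatedPrime_iff.1 hP
  obtain ⟨f, rfl⟩ := Ideal.Quotient.mk_surjective x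
  have hf : ∀ g, g ∈ P ↔ g * f ∈ I := by
    intro g
    rw [hx, Submodule.mem_colon_singleton, Submodule.mem_bot, ← Ideal.Quotient.eq_zero_iff_mem]
    rfl
  have hmonP := prime_monomial hI hprime f hf
  refine ⟨Finset.univ.filter (fun j => (X j : MvPolynomial (Fin n) K) ∈ P), ?_⟩
  have hspan : P = Ideal.span ((X : Fin n → MvPolynomial (Fin n) K) ''
      ((Finset.univ.filter (fun j => (X j : MvPolynomial (Fin n) K) ∈ P) :
        Finset (Fin n)) : Set (Fin n))) := by
    apply le_antisymm
    · intro g hg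
      rw [mem_ideal_span_X_image]
      intro m hm
      have h1 := hmonP _ g rfl hg m hm
      rw [monomial_eq, Finsupp.prod, C_1, one_mul] at h1
      obtain ⟨i, hi, hi2⟩ := (hprime.prod_mem_iff).1 h1
      refine ⟨i, ?_, Finsupp.mem_support_iff.1 hi⟩
      simpa using hprime.mem_of_pow_mem _ hi2
    · rw [Ideal.span_le]
      rintro _ ⟨j, hj, rfl⟩
      simpa using hj
  have hfI : f ∉ I := fun h => hprime.ne_top ((Ideal.eq_top_iff_one _).2 ((hf 1).2 (by simpa using h)))
  have : ∃ w ∈ f.support, monomial w (1 : K) ∉ I := by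
    by_contra hcon
    push Not at hcon
    apply hfI
    rw [f.as_sum]
    exact I.sum_mem (fun w hw => monomial_mem_of_one (hcon w hw) _)
  obtain ⟨w, hw, hwI⟩ := this
  refine ⟨w, hspan, hwI, ?_⟩
  intro j hj
  have hj' : (X j : MvPolynomial (Fin n) K) ∈ P := by simpa using hj
  apply mon_mem_of_mem hI ((hf _).1 hj')
  rw [mem_support_iff, mul_comm, coeff_mul_X]
  exact mem_support_iff.1 hw

lemma monomial_mem_iSup {K σ ι : Type*} [Field K] (u : ι → (σ →₀ ℕ)) (Z : ι → Finset σ)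
    (a : σ →₀ ℕ) (h : monomial a (1 : K) ∈ ⨆ i, stanleySpace K (u i) (Z i)) :
    ∃ i v, (v.support : Set σ) ⊆ Z i ∧ a = u i + v := by
  by_contra hcon
  push Not at hcon
  have hle : (⨆ i, stanleySpace K (u i) (Z i : Set σ)) ≤ LinearMap.ker (lcoeff K a) := by
    apply iSup_le
    intro i
    rw [stanleySpace, Submodule.span_le]
    rintro _ ⟨v, hv, rfl⟩
    classical
    have := hcon i v hv
    simp [coeff_monomial, Ne.symm this]
  have := hle h
  classical
  simp [coeff_monomial] at this

lemma monomial_mem_stanley {K σ : Type*} [Field K] {u v a : σ →₀ ℕ} {Z : Set σ}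
    (hv : (v.support : Set σ) ⊆ Z) (ha : a = u + v) :
    monomial a (1 : K) ∈ stanleySpace K u Z :=
  Submodule.subset_span ⟨v, hv, by rw [ha]⟩

lemma stanley_count {K σ : Type*} [Field K] [Fintype σ] [DecidableEq σ] {ι : Type} [Fintype ι]
    [Nonempty ι]
    {I : Ideal (MvPolynomial σ K)} {u : ι → (σ →₀ ℕ)} {Z : ι → Finset σ}
    (hD : IsStanleyDecompOfIdeal I u Z) {q : ℕ} (hq : ∀ i, q ≤ (Z i).card)
    (w : σ →₀ ℕ) (F : Finset σ) (hw : monomial w (1 : K) ∉ I)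
    (hF : ∀ j ∈ F, monomial (w + Finsupp.single j 1) (1 : K) ∈ I) :
    F.card * (q + F.card) ≤ F.card * Fintype.card σ + (F.card + 1).choose 2 := by
  obtain ⟨hind, hsup⟩ := hD
  have hdisj : ∀ (i i' : ι) (a : σ →₀ ℕ), monomial a (1 : K) ∈ stanleySpace K (u i) (Z i) →
      monomial a (1 : K) ∈ stanleySpace K (u i') (Z i') → i = i' := by
    intro i i' a h h'
    by_contra hne
    have := (Submodule.disjoint_def.1 (hind.pairwiseDisjoint hne)) _ h h'
    simp at this
  have hu : ∀ i, monomial (u i) (1 : K) ∈ I := by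
    intro i
    have h1 : monomial (u i) (1 : K) ∈ ⨆ i, stanleySpace K (u i) (Z i : Set σ) :=
      (le_iSup (fun i => stanleySpace K (u i) (Z i : Set σ)) i)
        (monomial_mem_stanley (v := 0) (by simp) (by simp))
    rw [hsup] at h1
    exact h1
  have key : ∀ j : σ, ∃ (i : ι) (v : σ →₀ ℕ), j ∈ F → (v.support : Set σ) ⊆ Z i ∧
      w + Finsupp.single j 1 = u i + v := by
    intro j
    by_cases hj : j ∈ F
    · have h1 : monomial (w + Finsupp.single j 1) (1 : K) ∈
          ⨆ i, stanleySpace K (u i) (Z i : Set σ) := by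
        rw [hsup]; exact hF j hj
      obtain ⟨i, v, h⟩ := monomial_mem_iSup u Z _ h1
      exact ⟨i, v, fun _ => h⟩
    · exact ⟨Classical.arbitrary ι, 0, fun h => absurd h hj⟩
  choose i v hiv using key
  have hinj : ∀ j ∈ F, ∀ j' ∈ F, i j = i j' → j = j' := by
    intro j hj j' hj' hij
    by_contra hne
    apply hw
    have hle : u (i j) ≤ w := by
      intro x
      have h1 := DFunLike.congr_fun (hiv j hj).2 x
      have h2 := DFunLike.congr_fun (hiv j' hj').2 x
      rw [← hij] at h2
      simp only [Finsupp.add_apply, Finsupp.single_apply] at h1 h2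
      by_cases hx : j = x
      · subst hx
        rw [if_neg (Ne.symm hne)] at h2
        omega
      · rw [if_neg hx] at h1
        omega
    have := I.mul_mem_left (monomial (w - u (i j)) (1 : K)) (hu (i j))
    rwa [monomial_mul, one_mul, tsub_add_cancel_of_le hle] at this
  have hcard : (F.sigma (fun j => Z (i j) ∩ F)).card ≤ F.sym2.card := by
    apply Finset.card_le_card_of_injOn (fun x : (Σ _ : σ, σ) => s(x.1, x.2))
    · rintro ⟨j, z⟩ hx
      simp only [Finset.coe_sigma, Set.mem_sigma_iff, Finset.mem_coe, Finset.mem_inter] at hx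
      simp [hx.1, hx.2.2]
    · rintro ⟨j, z⟩ hx ⟨j', z'⟩ hx' heq
      simp only [Finset.coe_sigma, Set.mem_sigma_iff, Finset.mem_coe, Finset.mem_inter] at hx hx'
      simp only [Sym2.eq_iff] at heq
      rcases heq with ⟨rfl, rfl⟩ | ⟨rfl, rfl⟩
      · rfl
      · have hmem : ∀ j z, j ∈ F → z ∈ Z (i j) →
            monomial (w + Finsupp.single j 1 + Finsupp.single z 1) (1 : K) ∈
              stanleySpace K (u (i j)) (Z (i j)) := by
          intro j z hj hz
          refine monomial_mem_stanley (v := v j + Finsupp.single z 1) ?_ ?_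
          · intro y hy
            have hy' := Finsupp.support_add hy
            rw [Finset.mem_union] at hy'
            rcases hy' with hy' | hy'
            · exact (hiv j hj).1 hy'
            · have := Finsupp.support_single_subset hy'
              rw [Finset.mem_singleton] at this
              rw [this]; exact hz
          · rw [(hiv j hj).2, add_assoc]
        have h1 := hmem j z hx.1 hx.2.1
        have h2 := hmem z j hx'.1 hx'.2.1
        rw [add_right_comm] at h2
        have := hinj _ hx.1 _ hx'.1 (hdisj _ _ _ h1 h2)
        subst this
        rfl
  rw [Finset.card_sym2, Finset.card_sigma] at hcard
  have hlow : ∀ j ∈ F, q + F.card ≤ (Z (i j) ∩ F).card + Fintype.card σ := by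
    intro j _
    have h1 := Finset.card_inter_add_card_union (Z (i j)) F
    have h2 := Finset.card_le_univ (Z (i j) ∪ F)
    have h3 := hq (i j)
    omega
  have hs := Finset.sum_le_sum hlow
  rw [Finset.sum_add_distrib (f := fun j => (Z (i j) ∩ F).card), Finset.sum_const,
    Finset.sum_const, smul_eq_mul, smul_eq_mul] at hs
  omega

end Helpers

/-- For `I' = (I, x_{n+1}, x_{n+2}) ⊆ S' = S[x_{n+1}, x_{n+2}]` one has
`sdepth_{S'} I' ≤ min_i (n + 1 - ⌊d_i/2⌋)`, where `d_i` are the heights of the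
associated primes of `S/I`. -/
theorem sdepth_extension_le {K : Type*} [Field K] {n s : ℕ}
    (I : Ideal (MvPolynomial (Fin n) K)) (hI : IsMonomialIdeal I)
    (P : Fin s → Ideal (MvPolynomial (Fin n) K))
    (hAss : associatedPrimes (MvPolynomial (Fin n) K)
      ((MvPolynomial (Fin n) K) ⧸ I) = Set.range P)
    (d : Fin s → ℕ)
    (hd : ∀ i, ∀ h : (P i).IsPrime, primeHt (P i) h = (d i : ℕ∞))
    (I' : Ideal (MvPolynomial (Fin (n + 2)) K))
    (hI' : I' = Ideal.map (rename (Fin.castAdd 2 : Fin n → Fin (n + 2))).toRingHom I ⊔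
      Ideal.span {(X (Fin.natAdd n (0 : Fin 2)) : MvPolynomial (Fin (n + 2)) K),
        X (Fin.natAdd n (1 : Fin 2))}) :
    ∀ i, sdepthIdeal I' ≤ n + 1 - d i / 2 := by
  classical
  intro i
  have hPi : P i ∈ associatedPrimes (MvPolynomial (Fin n) K) ((MvPolynomial (Fin n) K) ⧸ I) := by
    rw [hAss]; exact ⟨i, rfl⟩
  have hprime : (P i).IsPrime := IsAssociatedPrime.isPrime hPi
  obtain ⟨F, w, hspan, hwI, hF⟩ := assoc_struct hI hPi
  have hdF : d i ≤ F.card := by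
    have h1 : primeHt (P i) hprime = (P i).height :=
      (PrimeSpectrum.height_eq_orderHeight ⟨P i, hprime⟩).symm
    have h2 := (P i).height_le_spanFinrank hprime.ne_top
    rw [← h1, hd i hprime] at h2
    have h3 : d i ≤ (P i).spanFinrank := by exact_mod_cast h2
    refine h3.trans ?_
    rw [hspan]
    refine (Submodule.spanFinrank_span_le_ncard_of_finite (F.finite_toSet.image _)).trans ?_
    exact (Set.ncard_image_le F.finite_toSet).trans (by simp)
  have hFn : F.card ≤ n := by simpa using Finset.card_le_univ F
  -- transport to the bigger ring
  set W : Fin (n + 2) →₀ ℕ := Finsupp.mapDomain (Fin.castAdd 2) w with hW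
  set F' : Finset (Fin (n + 2)) :=
    F.map (Fin.castAddEmb 2) ∪ Finset.univ.map (Fin.natAddEmb n) with hF'
  have hF'card : F'.card = F.card + 2 := by
    rw [hF', Finset.card_union_of_disjoint]
    · simp
    · rw [Finset.disjoint_left]
      intro x hx hx'
      simp only [Finset.mem_map, Fin.castAddEmb_apply, Fin.natAddEmb_apply] at hx hx'
      obtain ⟨a, _, rfl⟩ := hx
      obtain ⟨b, _, hb⟩ := hx'
      have := congrArg Fin.val hb
      simp at this
      omega
  have hW1 : monomial W (1 : K) ∉ I' := by
    intro hmem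
    apply hwI
    let φ : MvPolynomial (Fin (n + 2)) K →ₐ[K] MvPolynomial (Fin n) K :=
      aeval (Fin.addCases (fun a => X a) (fun _ => 0))
    have hφ : ∀ p, φ (rename (Fin.castAdd 2) p) = p := by
      intro p
      simp only [φ, aeval_rename]
      have : (Fin.addCases (fun a => X a) (fun _ => 0) ∘ Fin.castAdd 2 :
          Fin n → MvPolynomial (Fin n) K) = X := by
        funext a; simp
      rw [this]; simp
    have hle : I' ≤ Ideal.comap φ.toRingHom I := by
      rw [hI', sup_le_iff, Ideal.map_le_iff_le_comap, Ideal.span_le]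
      constructor
      · intro p hp
        change φ (rename (Fin.castAdd 2) p) ∈ I
        rw [hφ]; exact hp
      · intro p hp
        change φ p ∈ I
        rcases hp with rfl | rfl <;> simp [φ]
    have h1 : φ (monomial W (1 : K)) ∈ I := hle hmem
    rwa [hW, ← rename_monomial, hφ] at h1
  have hW2 : ∀ j ∈ F', monomial (W + Finsupp.single j 1) (1 : K) ∈ I' := by
    intro j hj
    rw [hF', Finset.mem_union, Finset.mem_map, Finset.mem_map] at hj
    rcases hj with ⟨a, ha, rfl⟩ | ⟨b, _, rfl⟩
    · have h1 : W + Finsupp.single (Fin.castAddEmb 2 a) 1 =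
          Finsupp.mapDomain (Fin.castAdd 2) (w + Finsupp.single a 1) := by
        rw [Finsupp.mapDomain_add, Finsupp.mapDomain_single]; rfl
      rw [h1, ← rename_monomial, hI']
      apply Ideal.mem_sup_left
      exact Ideal.mem_map_of_mem (rename (Fin.castAdd 2 : Fin n → Fin (n + 2))).toRingHom (hF a ha)
    · have hX : (X (Fin.natAddEmb n b) : MvPolynomial (Fin (n + 2)) K) ∈ I' := by
        rw [hI']
        apply Ideal.mem_sup_right
        apply Ideal.subset_span
        fin_cases b
        · left; rfl
        · right; rfl
      have := I'.mul_mem_left (monomial W (1 : K)) hX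
      rwa [X, monomial_mul, one_mul] at this
  apply csSup_le'
  rintro q ⟨ι, _, _, u, Z, hD, hq⟩
  have hc := stanley_count hD hq W F' hW1 hW2
  rw [hF'card, Fintype.card_fin, Nat.choose_two_right] at hc
  have h2 : 2 * ((F.card + 2) * (q + (F.card + 2))) ≤
      2 * ((F.card + 2) * (n + 2)) + (F.card + 2) * (F.card + 3) := by
    have := Nat.div_mul_le_self ((F.card + 2 + 1) * (F.card + 2 + 1 - 1)) 2
    have e : (F.card + 2 + 1) * (F.card + 2 + 1 - 1) = (F.card + 2) * (F.card + 3) := by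
      rw [Nat.add_sub_cancel]; ring
    rw [e] at this hc
    omega
  have h3 : 2 * (q + (F.card + 2)) ≤ 2 * (n + 2) + (F.card + 3) := by
    have : (F.card + 2) * (2 * (q + (F.card + 2))) ≤
        (F.card + 2) * (2 * (n + 2) + (F.card + 3)) := by nlinarith
    exact Nat.le_of_mul_le_mul_left this (by omega)
  omega
end

section
/- Let I ⊆ S = K[x_1,…,x_n] be a monomial ideal such that I = Q_1 ∩ … ∩ Q_m is a reduced (irredundant) primary decomposition of I with P_i = √(Q_i), and suppose that G(P_i) ∩ G(P_j) = ∅ for all i ≠ j. Then sdepth_S(S/I) ≥ m − 1; in particular sdepth_S(S/I) ≥ depth_S(S/I), i.e., Stanley's conjecture holds for S/I. -/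
open MvPolynomial

section Homological

open CategoryTheory CategoryTheory.Abelian

universe u

/-- Cohomological depth bound: `Ext^i(N, M) = 0` for `i < t`. -/
def DGE {R : Type u} [CommRing R] (N : Type u) [AddCommGroup N] [Module R N]
    (M : Type u) [AddCommGroup M] [Module R M] (t : ℕ) : Prop :=
  ∀ i < t, ∀ x : Ext (ModuleCat.of R N) (ModuleCat.of R M) i, x = 0

variable {R : Type u} [CommRing R] {N : Type u} [AddCommGroup N] [Module R N]
variable {A B C : Type u} [AddCommGroup A] [Module R A] [AddCommGroup B] [Module R B]
  [AddCommGroup C] [Module R C]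

theorem shortExact_of {f : A →ₗ[R] B} {g : B →ₗ[R] C} (hf : Function.Injective f)
    (hg : Function.Surjective g) (h : Function.Exact f g) :
    (ModuleCat.shortComplexOfCompEqZero f g h.linearMap_comp_eq_zero).ShortExact where
  exact := ModuleCat.shortComplex_exact _ h
  mono_f := by
    rw [ModuleCat.mono_iff_injective]; exact hf
  epi_g := by
    rw [ModuleCat.epi_iff_surjective]; exact hg

theorem DGE.mono {t s : ℕ} (h : DGE (R := R) N A t) (hs : s ≤ t) : DGE (R := R) N A s :=
  fun i hi => h i (lt_of_lt_of_le hi hs)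

theorem DGE.zero : DGE (R := R) N A 0 := fun i hi => absurd hi (Nat.not_lt_zero i)

theorem DGE.left {f : A →ₗ[R] B} {g : B →ₗ[R] C} (hf : Function.Injective f)
    (hg : Function.Surjective g) (h : Function.Exact f g) {t : ℕ}
    (hB : DGE (R := R) N B (t + 1)) (hC : DGE (R := R) N C t) : DGE (R := R) N A (t + 1) := by
  intro i hi x
  have hS := shortExact_of hf hg h
  cases i with
  | zero =>
    have := Ext.postcomp_mk₀_injective_of_mono (ModuleCat.of R N) (ModuleCat.ofHom f)
      (hf := hS.mono_f)
    apply this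
    exact (hB 0 hi _).trans (hB 0 hi _).symm
  | succ i =>
    obtain ⟨y, rfl⟩ := Ext.covariant_sequence_exact₁ (ModuleCat.of R N) hS x (hB _ hi _) rfl
    rw [show y = 0 from hC i (by omega) y, Ext.zero_comp]

theorem DGE.right {f : A →ₗ[R] B} {g : B →ₗ[R] C} (hf : Function.Injective f)
    (hg : Function.Surjective g) (h : Function.Exact f g) {t : ℕ}
    (hB : DGE (R := R) N B t) (hA : DGE (R := R) N A (t + 1)) : DGE (R := R) N C t := by
  intro i hi x
  have hS := shortExact_of hf hg h
  obtain ⟨y, rfl⟩ := Ext.covariant_sequence_exact₃ (ModuleCat.of R N) hS x rfl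
    (hA _ (by omega) _)
  rw [show y = 0 from hB i (by omega) y, Ext.zero_comp]

theorem DGE.mid {f : A →ₗ[R] B} {g : B →ₗ[R] C} (hf : Function.Injective f)
    (hg : Function.Surjective g) (h : Function.Exact f g) {t : ℕ}
    (hA : DGE (R := R) N A t) (hC : DGE (R := R) N C t) : DGE (R := R) N B t := by
  intro i hi x
  have hS := shortExact_of hf hg h
  obtain ⟨y, rfl⟩ := Ext.covariant_sequence_exact₂ (ModuleCat.of R N) hS x
    (hC _ (by omega) _)
  rw [show y = 0 from hA i (by omega) y, Ext.zero_comp]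

theorem DGE.prod {t : ℕ} (hA : DGE (R := R) N A t) (hC : DGE (R := R) N C t) :
    DGE (R := R) N (A × C) t :=
  DGE.mid (f := LinearMap.inl R A C) (g := LinearMap.snd R A C) LinearMap.inl_injective
    LinearMap.snd_surjective .inl_snd hA hC

theorem ext_smul_eq_zero {r : R} (hr : ∀ y : N, r • y = 0) (i : ℕ)
    (x : Ext (ModuleCat.of R N) (ModuleCat.of R A) i) :
    x.comp (Ext.mk₀ (ModuleCat.ofHom (LinearMap.lsmul R A r))) (add_zero i) = 0 := by
  have h1 : ModuleCat.ofHom (LinearMap.lsmul R A r) = r • 𝟙 (ModuleCat.of R A) := rfl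
  have h2 : r • 𝟙 (ModuleCat.of R N) = 0 := by
    ext y
    exact hr y
  have h3 : r • x = (Ext.mk₀ (r • 𝟙 (ModuleCat.of R N))).comp x (zero_add i) := by
    simp [Ext.mk₀_smul]
  rw [h1, Ext.mk₀_smul, Ext.comp_smul, Ext.comp_mk₀_id, h3, h2, Ext.mk₀_zero, Ext.zero_comp]

/-- If `r` is a nonzerodivisor on `A` killing `N` and `A/rA` has depth `≥ t`, then
`A` has depth `≥ t+1`. -/
theorem DGE.of_regular {r : R} (hr : ∀ y : N, r • y = 0) (hreg : IsSMulRegular A r)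
    {g : A →ₗ[R] C} (hg : Function.Surjective g)
    (h : Function.Exact (LinearMap.lsmul R A r) g) {t : ℕ} (hC : DGE (R := R) N C t) :
    DGE (R := R) N A (t + 1) := by
  intro i hi x
  have hf : Function.Injective (LinearMap.lsmul R A r) := hreg
  have hS := shortExact_of hf hg h
  have hx := ext_smul_eq_zero hr i x
  cases i with
  | zero =>
    have := Ext.postcomp_mk₀_injective_of_mono (ModuleCat.of R N)
      (ModuleCat.ofHom (LinearMap.lsmul R A r)) (hf := hS.mono_f)
    apply this
    refine Eq.trans ?_ (map_zero _).symm
    exact hx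
  | succ i =>
    obtain ⟨y, rfl⟩ := Ext.covariant_sequence_exact₁ (ModuleCat.of R N) hS x hx rfl
    rw [show y = 0 from hC i (by omega) y, Ext.zero_comp]

theorem DGE.of_isWeaklyRegular (rs : List R) (hrs : ∀ r ∈ rs, ∀ y : N, r • y = 0) :
    ∀ (A : Type u) [AddCommGroup A] [Module R A],
      RingTheory.Sequence.IsWeaklyRegular A rs → DGE (R := R) N A rs.length := by
  induction rs with
  | nil => intro A _ _ _; exact DGE.zero
  | cons r rs ih =>
    intro A _ _ h
    rw [RingTheory.Sequence.isWeaklyRegular_cons_iff] at h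
    refine DGE.of_regular (hrs r (by simp)) h.1 (Submodule.mkQ_surjective _)
      (LinearMap.exact_lsmul_mkQ_smul_top A r) (ih (fun s hs => hrs s (by simp [hs])) _ h.2)

theorem not_DGE_one {f : N →ₗ[R] A} (hf : f ≠ 0) : ¬ DGE (R := R) N A 1 := by
  intro h
  have := h 0 one_pos (Ext.mk₀ (ModuleCat.ofHom f))
  rw [Ext.mk₀_eq_zero_iff] at this
  apply hf
  exact congrArg ModuleCat.Hom.hom this

end Homological

section LowerSetIdeals

open MvPolynomial

universe u

/-- The monomial ideal of polynomials with no monomial in the lower set `D`. -/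
def IL (K : Type u) [Field K] {σ : Type} (D : LowerSet (σ →₀ ℕ)) : Ideal (MvPolynomial σ K) where
  carrier := {f | ∀ a ∈ D, coeff a f = 0}
  add_mem' := by
    intro f g hf hg a ha
    rw [coeff_add, hf a ha, hg a ha, add_zero]
  zero_mem' := by intro a _; simp
  smul_mem' := by
    classical
    intro c f hf a ha
    rw [smul_eq_mul, coeff_mul]
    refine Finset.sum_eq_zero fun p hp => ?_
    have h2 : p.2 ≤ a := by
      rw [Finset.HasAntidiagonal.mem_antidiagonal] at hp
      rw [← hp]; exact le_add_self
    rw [hf p.2 (D.lower h2 ha), mul_zero]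

theorem mem_IL {K : Type u} [Field K] {σ : Type} {D : LowerSet (σ →₀ ℕ)} {f : MvPolynomial σ K} :
    f ∈ IL K D ↔ ∀ a ∈ D, coeff a f = 0 := Iff.rfl

variable {K : Type u} [Field K] {σ : Type}

theorem IL_sup (D₁ D₂ : LowerSet (σ →₀ ℕ)) : IL K (D₁ ⊔ D₂) = IL K D₁ ⊓ IL K D₂ := by
  ext f
  simp only [Ideal.mem_inf, mem_IL, LowerSet.mem_sup_iff]
  exact ⟨fun h => ⟨fun a ha => h a (.inl ha), fun a ha => h a (.inr ha)⟩,
    fun h a ha => ha.elim (h.1 a) (h.2 a)⟩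

theorem IL_anti {D₁ D₂ : LowerSet (σ →₀ ℕ)} (h : D₁ ≤ D₂) : IL K D₂ ≤ IL K D₁ :=
  fun _ hf a ha => hf a (h ha)

theorem IL_inf (D₁ D₂ : LowerSet (σ →₀ ℕ)) : IL K (D₁ ⊓ D₂) = IL K D₁ ⊔ IL K D₂ := by
  classical
  apply le_antisymm
  · intro f hf
    rw [f.as_sum]
    refine Ideal.sum_mem _ fun a ha => ?_
    by_cases h1 : a ∈ D₁
    · by_cases h2 : a ∈ D₂
      · exact absurd (hf a ⟨h1, h2⟩) (mem_support_iff.mp ha)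
      · refine Ideal.mem_sup_right fun b hb => ?_
        rw [coeff_monomial, if_neg]
        rintro rfl; exact h2 hb
    · refine Ideal.mem_sup_left fun b hb => ?_
      rw [coeff_monomial, if_neg]
      rintro rfl; exact h1 hb
  · exact sup_le (IL_anti inf_le_left) (IL_anti inf_le_right)

/-- The residue field as a module. -/
abbrev resF (K : Type u) [Field K] (σ : Type) : Type u :=
  MvPolynomial σ K ⧸ Ideal.span (Set.range (X : σ → MvPolynomial σ K))

/-- depth of `S/I_D` is at least `t`. -/
def LD (K : Type u) [Field K] {σ : Type} (D : LowerSet (σ →₀ ℕ)) (t : ℕ) : Prop :=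
  DGE (R := MvPolynomial σ K) (resF K σ) (MvPolynomial σ K ⧸ IL K D) t

theorem resF_smul {r : MvPolynomial σ K}
    (hr : r ∈ Ideal.span (Set.range (X : σ → MvPolynomial σ K))) (y : resF K σ) : r • y = 0 := by
  obtain ⟨y, rfl⟩ := Ideal.Quotient.mk_surjective y
  rw [← Ideal.Quotient.mk_eq_mk, ← Submodule.Quotient.mk_smul, Ideal.Quotient.mk_eq_mk,
    Ideal.Quotient.eq_zero_iff_mem, smul_eq_mul]
  exact Ideal.mul_mem_right _ _ hr

section MV

variable {R : Type u} [CommRing R] (I J : Ideal R)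

/-- first Mayer-Vietoris map -/
def mvf : (R ⧸ (I ⊓ J)) →ₗ[R] (R ⧸ I) × (R ⧸ J) :=
  (Submodule.factor inf_le_left).prod (Submodule.factor inf_le_right)

/-- second Mayer-Vietoris map -/
def mvg : ((R ⧸ I) × (R ⧸ J)) →ₗ[R] (R ⧸ (I ⊔ J)) :=
  (Submodule.factor le_sup_left).coprod (-(Submodule.factor le_sup_right))

theorem mvf_inj : Function.Injective (mvf I J) := by
  rw [injective_iff_map_eq_zero]
  intro x hx
  obtain ⟨x, rfl⟩ := Submodule.Quotient.mk_surjective _ x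
  have h1 : (Submodule.Quotient.mk x : R ⧸ I) = 0 := congrArg Prod.fst hx
  have h2 : (Submodule.Quotient.mk x : R ⧸ J) = 0 := congrArg Prod.snd hx
  rw [Submodule.Quotient.mk_eq_zero] at *
  exact ⟨h1, h2⟩

theorem mvg_surj : Function.Surjective (mvg I J) := by
  intro x
  obtain ⟨x, rfl⟩ := Submodule.Quotient.mk_surjective _ x
  exact ⟨(Submodule.Quotient.mk x, 0), by simp [mvg]⟩

theorem mv_exact : Function.Exact (mvf I J) (mvg I J) := by
  rintro ⟨x, y⟩
  obtain ⟨x, rfl⟩ := Submodule.Quotient.mk_surjective _ x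
  obtain ⟨y, rfl⟩ := Submodule.Quotient.mk_surjective _ y
  have h0 : mvg I J (Submodule.Quotient.mk x, Submodule.Quotient.mk y) =
      Submodule.Quotient.mk (x - y) := by
    simp [mvg, sub_eq_add_neg]
  rw [h0, Submodule.Quotient.mk_eq_zero]
  constructor
  · intro h
    obtain ⟨a, ha, b, hb, hab⟩ := Submodule.mem_sup.mp h
    refine ⟨Submodule.Quotient.mk (x - a), ?_⟩
    refine Prod.ext ?_ ?_
    · refine (Submodule.Quotient.eq I).mpr ?_
      change x - a - x ∈ I
      have : x - a - x = -a := by ring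
      rw [this]; exact neg_mem ha
    · refine (Submodule.Quotient.eq J).mpr ?_
      change x - a - y ∈ J
      have : x - a - y = b := by rw [sub_right_comm, ← hab]; ring
      rw [this]; exact hb
  · rintro ⟨z, hz⟩
    obtain ⟨z, rfl⟩ := Submodule.Quotient.mk_surjective _ z
    have h1 : (Submodule.Quotient.mk z : R ⧸ I) = Submodule.Quotient.mk x := congrArg Prod.fst hz
    have h2 : (Submodule.Quotient.mk z : R ⧸ J) = Submodule.Quotient.mk y := congrArg Prod.snd hz
    rw [Submodule.Quotient.eq] at h1 h2
    have : x - y = -(z - x) + (z - y) := by ring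
    rw [this]
    exact add_mem (Ideal.mem_sup_left (neg_mem h1)) (Ideal.mem_sup_right h2)

variable {N : Type u} [AddCommGroup N] [Module R N] {I J}

theorem mv_left {L M : Ideal R} (hL : L = I ⊓ J) (hM : M = I ⊔ J) {t : ℕ}
    (h1 : DGE (R := R) N (R ⧸ I) (t + 1)) (h2 : DGE (R := R) N (R ⧸ J) (t + 1))
    (h : DGE (R := R) N (R ⧸ M) t) : DGE (R := R) N (R ⧸ L) (t + 1) := by
  subst hL hM
  have hp : DGE (R := R) N ((R ⧸ I) × (R ⧸ J)) (t + 1) := DGE.prod h1 h2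
  exact DGE.left (f := mvf I J) (g := mvg I J) (mvf_inj I J) (mvg_surj I J) (mv_exact I J) hp h

theorem mv_right {L M : Ideal R} (hL : L = I ⊓ J) (hM : M = I ⊔ J) {t : ℕ}
    (h1 : DGE (R := R) N (R ⧸ I) t) (h2 : DGE (R := R) N (R ⧸ J) t)
    (h : DGE (R := R) N (R ⧸ L) (t + 1)) : DGE (R := R) N (R ⧸ M) t := by
  subst hL hM
  have hp : DGE (R := R) N ((R ⧸ I) × (R ⧸ J)) t := DGE.prod h1 h2
  exact DGE.right (f := mvf I J) (g := mvg I J) (mvf_inj I J) (mvg_surj I J) (mv_exact I J) hp h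

end MV

theorem LD.sup {D₁ D₂ : LowerSet (σ →₀ ℕ)} {t : ℕ} (h1 : LD K D₁ (t + 1)) (h2 : LD K D₂ (t + 1))
    (h : LD K (D₁ ⊓ D₂) t) : LD K (D₁ ⊔ D₂) (t + 1) :=
  mv_left (IL_sup D₁ D₂) (IL_inf D₁ D₂) h1 h2 h

theorem LD.inf {D₁ D₂ : LowerSet (σ →₀ ℕ)} {t : ℕ} (h1 : LD K D₁ t) (h2 : LD K D₂ t)
    (h : LD K (D₁ ⊔ D₂) (t + 1)) : LD K (D₁ ⊓ D₂) t :=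
  mv_right (IL_sup D₁ D₂) (IL_inf D₁ D₂) h1 h2 h

/-- monomials not involving the variable `x` -/
def Zx (x : σ) : LowerSet (σ →₀ ℕ) where
  carrier := {a | a x = 0}
  lower' := by
    intro a b hab ha
    exact Nat.le_zero.mp (le_of_le_of_eq (hab x) ha)

theorem mem_Zx {x : σ} {a : σ →₀ ℕ} : a ∈ Zx x ↔ a x = 0 := Iff.rfl

/-- `D` is a cylinder over a bounded set of exponents in the variables `A`. -/
def Cyl (A : Finset σ) (D : LowerSet (σ →₀ ℕ)) : Prop :=
  (∀ a b : σ →₀ ℕ, (∀ x ∈ A, a x = b x) → a ∈ D → b ∈ D) ∧ ∃ N, ∀ a ∈ D, ∀ x ∈ A, a x < N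

theorem Cyl.inf [DecidableEq σ] {A B : Finset σ} {D E : LowerSet (σ →₀ ℕ)} (hD : Cyl A D)
    (hE : Cyl B E) : Cyl (A ∪ B) (D ⊓ E) := by
  obtain ⟨h1, N, hN⟩ := hD
  obtain ⟨h2, M, hM⟩ := hE
  refine ⟨fun a b h hab => ⟨h1 a b (fun x hx => h x (by simp [hx])) hab.1,
    h2 a b (fun x hx => h x (by simp [hx])) hab.2⟩, max N M, fun a ha x hx => ?_⟩
  rcases Finset.mem_union.mp hx with hx | hx
  · exact lt_max_of_lt_left (hN a ha.1 x hx)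
  · exact lt_max_of_lt_right (hM a ha.2 x hx)

theorem Cyl.zx (x : σ) : Cyl {x} (Zx x) :=
  ⟨fun a b h ha => by
    rw [mem_Zx] at *; rw [← h x (by simp)]; exact ha,
    1, fun a ha y hy => by
      rw [Finset.mem_singleton.mp hy, mem_Zx.mp ha]; exact one_pos⟩

theorem Cyl.add_single {A : Finset σ} {D : LowerSet (σ →₀ ℕ)} (hD : Cyl A D) {x : σ} (hx : x ∉ A)
    {a : σ →₀ ℕ} (ha : a ∈ D) : Finsupp.single x 1 + a ∈ D := by
  refine hD.1 a _ (fun y hy => ?_) ha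
  have : x ≠ y := by rintro rfl; exact hx hy
  simp [this]

theorem reg_X {A : Finset σ} {D : LowerSet (σ →₀ ℕ)} (hD : Cyl A D) {x : σ} (hx : x ∉ A) :
    IsSMulRegular (MvPolynomial σ K ⧸ IL K D) (X x : MvPolynomial σ K) := by
  rw [isSMulRegular_iff_right_eq_zero_of_smul]
  intro f hf
  obtain ⟨f, rfl⟩ := Submodule.Quotient.mk_surjective _ f
  rw [← Submodule.Quotient.mk_smul, Submodule.Quotient.mk_eq_zero] at hf
  rw [Submodule.Quotient.mk_eq_zero]
  intro a ha
  have := hf _ (hD.add_single hx ha)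
  rwa [smul_eq_mul, coeff_X_mul] at this

theorem exact_X {D : LowerSet (σ →₀ ℕ)} (x : σ) :
    Function.Exact (LinearMap.lsmul (MvPolynomial σ K) (MvPolynomial σ K ⧸ IL K D) (X x))
      (Submodule.factor (IL_anti (K := K) (inf_le_left : D ⊓ Zx x ≤ D))) := by
  intro f
  obtain ⟨f, rfl⟩ := Submodule.Quotient.mk_surjective _ f
  change (Submodule.Quotient.mk f : MvPolynomial σ K ⧸ IL K (D ⊓ Zx x)) = 0 ↔ _
  rw [Submodule.Quotient.mk_eq_zero]
  constructor
  · intro hf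
    refine ⟨Submodule.Quotient.mk (f.divMonomial (Finsupp.single x 1)), ?_⟩
    rw [LinearMap.lsmul_apply, ← Submodule.Quotient.mk_smul, Submodule.Quotient.eq, smul_eq_mul]
    intro a ha
    have h := divMonomial_add_modMonomial_single f x
    have h' : X x * f.divMonomial (Finsupp.single x 1) - f =
      - (f.modMonomial (Finsupp.single x 1)) := by
      linear_combination h
    rw [h', coeff_neg, neg_eq_zero]
    by_cases hxa : Finsupp.single x 1 ≤ a
    · exact coeff_modMonomial_of_le _ hxa
    · rw [coeff_modMonomial_of_not_le _ hxa]
      refine hf a ⟨ha, ?_⟩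
      rw [Finsupp.single_le_iff] at hxa
      change a x = 0
      omega
  · rintro ⟨g, hg⟩
    obtain ⟨g, rfl⟩ := Submodule.Quotient.mk_surjective _ g
    rw [LinearMap.lsmul_apply, ← Submodule.Quotient.mk_smul, Submodule.Quotient.eq,
      smul_eq_mul] at hg
    intro a ha
    have h1 := hg a ha.1
    have h2 : coeff a (X x * g) = 0 := by
      classical
      rw [coeff_X_mul', if_neg]
      rw [Finsupp.mem_support_iff, not_not]
      exact ha.2
    rw [coeff_sub, h2, zero_sub, neg_eq_zero] at h1
    exact h1

theorem factor_surj {D : LowerSet (σ →₀ ℕ)} (x : σ) : Function.Surjective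
    (Submodule.factor (IL_anti (K := K) (inf_le_left : D ⊓ Zx x ≤ D))) :=
  Submodule.factor_surjective _

theorem X_mem (x : σ) :
    (X x : MvPolynomial σ K) ∈ Ideal.span (Set.range (X : σ → MvPolynomial σ K)) :=
  Ideal.subset_span ⟨x, rfl⟩

variable [Fintype σ] [DecidableEq σ]

theorem cyl_lower (k : ℕ) : ∀ (A : Finset σ) (D : LowerSet (σ →₀ ℕ)), Cyl A D →
    A.card + k ≤ Fintype.card σ → LD K D k := by
  induction k with
  | zero => intro A D _ _; exact DGE.zero
  | succ k ih =>
    intro A D hD h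
    obtain ⟨x, hx⟩ : ∃ x, x ∉ A := by
      by_contra! hc
      have : A = Finset.univ := by ext; simp [hc]
      rw [this, Finset.card_univ] at h
      omega
    have := ih (A ∪ {x}) (D ⊓ Zx x) (hD.inf (Cyl.zx x)) (by
      rw [Finset.card_union_of_disjoint (by simpa using hx), Finset.card_singleton]; omega)
    exact DGE.of_regular (fun y => resF_smul (X_mem x) y) (reg_X hD hx) (factor_surj x)
      (exact_X x) this

theorem socle {D : LowerSet (σ →₀ ℕ)} (hD : Cyl Finset.univ D) (hne : 0 ∈ D) : ¬ LD K D 1 := by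
  obtain ⟨N, hN⟩ := hD.2
  have hfin : (D : Set (σ →₀ ℕ)).Finite := by
    refine (Set.finite_Iic (Finsupp.equivFunOnFinite.symm (fun _ : σ => N))).subset ?_
    intro a ha x
    exact (hN a ha x (Finset.mem_univ x)).le
  obtain ⟨a, ha⟩ := hfin.exists_maximal ⟨0, hne⟩
  let g : MvPolynomial σ K →ₗ[MvPolynomial σ K] (MvPolynomial σ K ⧸ IL K D) :=
    LinearMap.toSpanSingleton _ _ (Submodule.Quotient.mk (monomial a 1))
  have hg : Ideal.span (Set.range (X : σ → MvPolynomial σ K)) ≤ LinearMap.ker g := by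
    rw [Ideal.span_le]
    rintro _ ⟨x, rfl⟩
    change g (X x) = 0
    rw [LinearMap.toSpanSingleton_apply, ← Submodule.Quotient.mk_smul,
      Submodule.Quotient.mk_eq_zero]
    intro b hb
    rw [smul_eq_mul, X, monomial_mul, coeff_monomial, if_neg]
    rintro rfl
    have h1 : a ≤ Finsupp.single x 1 + a := le_add_self
    have h2 := ha.2 hb h1 x
    simp at h2
  refine not_DGE_one (f := Submodule.liftQ _ g hg) ?_
  intro h0
  have h1 : Submodule.liftQ _ g hg (Submodule.Quotient.mk 1) = 0 := by rw [h0]; rfl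
  rw [Submodule.liftQ_apply, LinearMap.toSpanSingleton_apply, one_smul,
    Submodule.Quotient.mk_eq_zero] at h1
  have h2 := h1 a ha.1
  simp at h2

theorem cyl_upper (k : ℕ) : ∀ (A : Finset σ) (D : LowerSet (σ →₀ ℕ)) (t : ℕ), Cyl A D → 0 ∈ D →
    A.card + k = Fintype.card σ → LD K D t → t + A.card ≤ Fintype.card σ := by
  induction k with
  | zero =>
    intro A D t hD h0 hk h
    have hA : A = Finset.univ := by
      rw [← Finset.card_eq_iff_eq_univ]; omega
    rcases Nat.eq_zero_or_pos t with rfl | ht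
    · omega
    · subst hA
      exact absurd (DGE.mono h ht) (socle hD h0)
  | succ k ih =>
    intro A D t hD h0 hk h
    obtain ⟨x, hx⟩ : ∃ x, x ∉ A := by
      by_contra! hc
      have : A = Finset.univ := by ext; simp [hc]
      rw [this, Finset.card_univ] at hk
      omega
    have hc : (A ∪ {x}).card = A.card + 1 := by
      rw [Finset.card_union_of_disjoint (by simpa using hx), Finset.card_singleton]
    cases t with
    | zero => omega
    | succ t =>
      have h1 : LD K (D ⊓ Zx x) t :=
        DGE.right (show Function.Injective (LinearMap.lsmul (MvPolynomial σ K) (MvPolynomial σ K ⧸ IL K D) (X x)) from reg_X hD hx) (factor_surj x) (exact_X x) (DGE.mono h (Nat.le_succ t)) h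
      have := ih (A ∪ {x}) (D ⊓ Zx x) t (hD.inf (Cyl.zx x)) ⟨h0, rfl⟩ (by omega) h1
      omega

variable {ι : Type} (A : ι → Finset σ) (D : ι → LowerSet (σ →₀ ℕ))

theorem multi_lower (hD : ∀ i, Cyl (A i) (D i)) (s : Finset ι) (hs : s.Nonempty) :
    (∀ i ∈ s, (A i).Nonempty) →
    ∀ (B : Finset σ) (E : LowerSet (σ →₀ ℕ)) (t : ℕ), Cyl B E →
    t + ∑ i ∈ s, (A i).card + B.card + 1 ≤ Fintype.card σ + s.card → LD K (E ⊓ s.sup D) t := by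
  induction hs using Finset.Nonempty.cons_induction with
  | singleton i =>
    intro _ B E t hE ht
    rw [Finset.sup_singleton]
    simp only [Finset.sum_singleton, Finset.card_singleton] at ht
    have := Finset.card_union_le B (A i)
    exact cyl_lower t (B ∪ A i) _ (hE.inf (hD i)) (by omega)
  | cons i s hi hs ih =>
    intro hne B E t hE ht
    have hne' : ∀ j ∈ s, (A j).Nonempty := fun j hj => hne j (by simp [hj])
    have hsum : s.card ≤ ∑ j ∈ s, (A j).card := by
      rw [Finset.card_eq_sum_ones]
      exact Finset.sum_le_sum fun j hj => (hne' j hj).card_pos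
    have hAi : 0 < (A i).card := (hne i (by simp)).card_pos
    rw [Finset.sum_cons, Finset.card_cons] at ht
    have hcu := Finset.card_union_le B (A i)
    cases t with
    | zero => exact DGE.zero
    | succ t =>
      have h1 := ih hne' B E (t + 1) hE (by omega)
      have h2 : LD K (E ⊓ D i) (t + 1) :=
        cyl_lower (t + 1) (B ∪ A i) _ (hE.inf (hD i)) (by omega)
      have h3 := ih hne' (B ∪ A i) (E ⊓ D i) t (hE.inf (hD i)) (by omega)
      have e1 : E ⊓ (Finset.cons i s hi).sup D = (E ⊓ D i) ⊔ (E ⊓ s.sup D) := by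
        rw [Finset.sup_cons, inf_sup_left]
      have e2 : (E ⊓ D i) ⊓ (E ⊓ s.sup D) = (E ⊓ D i) ⊓ s.sup D := by
        rw [← inf_assoc, inf_right_comm E (D i) E, inf_idem]
      rw [e1]
      refine LD.sup h2 h1 ?_
      rw [e2]; exact h3

theorem multi_upper (hD : ∀ i, Cyl (A i) (D i)) (h0 : ∀ i, 0 ∈ D i)
    (hdisj : ∀ i j, i ≠ j → Disjoint (A i) (A j)) (s : Finset ι) (hs : s.Nonempty) :
    (s.card ≠ 1 → ∀ i ∈ s, (A i).Nonempty) →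
    ∀ (B : Finset σ) (E : LowerSet (σ →₀ ℕ)) (t : ℕ), Cyl B E → 0 ∈ E →
    (∀ i ∈ s, Disjoint B (A i)) → LD K (E ⊓ s.sup D) t →
    t + ∑ i ∈ s, (A i).card + B.card + 1 ≤ Fintype.card σ + s.card := by
  induction hs using Finset.Nonempty.cons_induction with
  | singleton i =>
    intro _ B E t hE h0E hB h
    rw [Finset.sup_singleton] at h
    simp only [Finset.sum_singleton, Finset.card_singleton]
    have hc := Finset.card_union_of_disjoint (hB i (by simp))
    have hle := Finset.card_le_univ (B ∪ A i)
    have := cyl_upper _ (B ∪ A i) _ t (hE.inf (hD i)) ⟨h0E, h0 i⟩ (Nat.add_sub_cancel' hle) h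
    omega
  | cons i s hi hs ih =>
    intro hne0 B E t hE h0E hB h
    have hne := hne0 (by rw [Finset.card_cons]; have := hs.card_pos; omega)
    have hne' : ∀ j ∈ s, (A j).Nonempty := fun j hj => hne j (by simp [hj])
    have hsum : s.card ≤ ∑ j ∈ s, (A j).card := by
      rw [Finset.card_eq_sum_ones]
      exact Finset.sum_le_sum fun j hj => (hne' j hj).card_pos
    have hAi : 0 < (A i).card := (hne i (by simp)).card_pos
    rw [Finset.sum_cons, Finset.card_cons]
    have hc := Finset.card_union_of_disjoint (hB i (by simp))
    have hB' : ∀ j ∈ s, Disjoint (B ∪ A i) (A j) := by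
      intro j hj
      rw [Finset.disjoint_union_left]
      exact ⟨hB j (by simp [hj]), hdisj i j (by rintro rfl; exact hi hj)⟩
    have key := fun t => ih (fun _ => hne') (B ∪ A i) (E ⊓ D i) t (hE.inf (hD i)) ⟨h0E, h0 i⟩ hB'
    have k0 := key 0 DGE.zero
    by_contra! hlt
    obtain ⟨q, hq⟩ : ∃ q, q + (∑ j ∈ s, (A j).card) + (A i).card + B.card
        = Fintype.card σ + s.card := by
      refine ⟨Fintype.card σ + s.card - ((∑ j ∈ s, (A j).card) + (A i).card + B.card), ?_⟩
      omega
    have h' : LD K (E ⊓ (Finset.cons i s hi).sup D) (q + 1) := DGE.mono h (by omega)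
    have h1 : LD K (E ⊓ s.sup D) q := multi_lower A D hD s hs hne' B E q hE (by omega)
    have h2 : LD K (E ⊓ D i) q :=
        cyl_lower q (B ∪ A i) _ (hE.inf (hD i)) (by omega)
    have e1 : E ⊓ (Finset.cons i s hi).sup D = (E ⊓ D i) ⊔ (E ⊓ s.sup D) := by
      rw [Finset.sup_cons, inf_sup_left]
    have e2 : (E ⊓ D i) ⊓ (E ⊓ s.sup D) = (E ⊓ D i) ⊓ s.sup D := by
      rw [← inf_assoc, inf_right_comm E (D i) E, inf_idem]
    rw [e1] at h'
    have h3 := LD.inf h2 h1 h'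
    rw [e2] at h3
    have := key q h3
    omega

end LowerSetIdeals

section Partition

/-- exponents of the monomials in the Stanley space `x^u K[Z]` -/
def Piece {σ : Type} (u : σ →₀ ℕ) (Z : Finset σ) (a : σ →₀ ℕ) : Prop :=
  u ≤ a ∧ ∀ x ∉ Z, a x = u x

variable {n m : ℕ}

theorem label_piece (A : Fin m → Finset (Fin n)) (D : Fin m → LowerSet (Fin n →₀ ℕ))
    (hD : ∀ i, Cyl (A i) (D i)) (hdisj : ∀ i j, i ≠ j → Disjoint (A i) (A j))
    (hne : m ≠ 1 → ∀ i, (A i).Nonempty) (N : ℕ) (hN : ∀ i, ∀ a ∈ D i, ∀ x ∈ A i, a x < N)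
    (e : Fin m → Fin n) (he : ∀ j k : Fin m, j < k → e j ∈ A j)
    (d : ℕ) (hd : d + ∑ i, (A i).card + 1 ≤ n + m)
    (k : Fin m) (E : Finset (Fin n)) (hE : E = (Finset.univ.filter (· < k)).image e)
    (τ : Fin n → ℕ) (hτN : ∀ x, ∀ j ≤ k, x ∈ A j → τ x = N)
    (hτ0 : ∀ x, (∀ j ≤ k, x ∉ A j) → τ x = 0)
    (a : Fin n →₀ ℕ) (hak : a ∈ D k) (haj : ∀ j < k, a ∉ D j) :
    ∃ (u : Fin n →₀ ℕ) (Z : Finset (Fin n)), d ≤ Z.card ∧ ∀ b : Fin n →₀ ℕ,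
      (b ∈ D k ∧ (∀ j < k, b ∉ D j) ∧ ∀ x ∉ E, min (b x) (τ x) = min (a x) (τ x)) ↔
        Piece u Z b := by
  classical
  have hEA : ∀ j < k, ∀ x ∈ A j, x ∈ E → x = e j := by
    intro j hj x hx hxE
    rw [hE, Finset.mem_image] at hxE
    obtain ⟨i, hi, rfl⟩ := hxE
    by_cases hij : i = j
    · rw [hij]
    · exact absurd hx (Finset.disjoint_left.mp (hdisj i j hij) (he i k (by simpa using hi)))
  have hEk : ∀ x ∈ A k, x ∉ E := by
    intro x hx hxE
    rw [hE, Finset.mem_image] at hxE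
    obtain ⟨i, hi, rfl⟩ := hxE
    have hi' : i < k := by simpa using hi
    exact Finset.disjoint_left.mp (hdisj i k hi'.ne) (he i k hi') hx
  have heE : ∀ j < k, e j ∈ E := by
    intro j hj
    rw [hE]
    exact Finset.mem_image_of_mem _ (by simpa using hj)
  -- the threshold
  have ht : ∀ j : Fin m, ∃ t : ℕ, j < k → ∀ b : Fin n →₀ ℕ,
      (∀ x ∉ E, min (b x) (τ x) = min (a x) (τ x)) → (b ∉ D j ↔ t ≤ b (e j)) := by
    intro j
    by_cases hj : j < k
    swap
    · exact ⟨0, fun h => absurd h hj⟩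
    let v : ℕ → (Fin n →₀ ℕ) := fun t =>
      Finsupp.equivFunOnFinite.symm (fun x => if x = e j then t else min (a x) N)
    have hv : ∀ t x, v t x = if x = e j then t else min (a x) N := fun t x => rfl
    have hex : ∃ t, v t ∉ D j := by
      refine ⟨N, fun h => ?_⟩
      have := hN j _ h (e j) (he j k hj)
      rw [hv, if_pos rfl] at this
      exact lt_irrefl _ this
    refine ⟨Nat.find hex, fun _ b hb => ?_⟩
    have h1 : ∀ t, v t ∉ D j ↔ Nat.find hex ≤ t := by
      intro t
      constructor
      · exact fun h => Nat.find_min' hex h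
      · intro h h'
        refine Nat.find_spec hex ((D j).lower (fun x => ?_) h')
        rw [hv, hv]
        split_ifs
        · exact h
        · exact le_rfl
    rw [← h1, not_iff_not]
    have hb' : ∀ x ∈ A j, x ≠ e j → min (b x) N = min (a x) N := by
      intro x hx hxe
      have := hb x (fun h => hxe (hEA j hj x hx h))
      rwa [hτN x j hj.le hx] at this
    constructor
    · intro h
      refine (hD j).1 b _ (fun x hx => ?_) h
      rw [hv]
      split_ifs with hxe
      · rw [hxe]
      · rw [← hb' x hx hxe, min_eq_left (hN j b h x hx).le]
    · intro h
      refine (hD j).1 _ b (fun x hx => ?_) h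
      have h2 := hN j _ h x hx
      rw [hv] at h2 ⊢
      split_ifs at h2 ⊢ with hxe
      · rw [hxe]
      · have := hb' x hx hxe
        omega
  choose t ht using ht
  let u : Fin n →₀ ℕ := Finsupp.equivFunOnFinite.symm (fun x =>
    if x ∈ E then (Finset.univ.filter (fun j => j < k ∧ e j = x)).sup t else min (a x) (τ x))
  have hu : ∀ x, u x = if x ∈ E then (Finset.univ.filter (fun j => j < k ∧ e j = x)).sup t
    else min (a x) (τ x) := fun x => rfl
  refine ⟨u, Finset.univ.filter (fun x => x ∈ E ∨ τ x ≤ a x), ?_, ?_⟩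
  · -- cardinality
    have hEcard : E.card = k := by
      rw [hE, Finset.card_image_of_injOn]
      · have : Finset.univ.filter (fun j : Fin m => j < k) = Finset.Iio k := by
          ext j; simp
        rw [this, Fin.card_Iio]
      · intro i hi j hj hij
        by_contra hne'
        have hi' : i < k := by simpa using hi
        have hj' : j < k := by simpa using hj
        have h1 := he i k hi'
        rw [hij] at h1
        exact Finset.disjoint_left.mp (hdisj i j hne') h1 (he j k hj')
    have hEsub : E ⊆ (Finset.univ.filter (· ≤ k)).biUnion A := by
      intro x hx
      rw [hE, Finset.mem_image] at hx
      obtain ⟨i, hi, rfl⟩ := hx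
      have hi' : i < k := by simpa using hi
      rw [Finset.mem_biUnion]
      exact ⟨i, by simpa using hi'.le, he i k hi'⟩
    have hsub : (Finset.univ \ ((Finset.univ.filter (· ≤ k)).biUnion A \ E)) ⊆
        Finset.univ.filter (fun x => x ∈ E ∨ τ x ≤ a x) := by
      intro x hx
      simp only [Finset.mem_sdiff, Finset.mem_univ, true_and, Finset.mem_biUnion,
        Finset.mem_filter, not_and, not_not] at hx ⊢
      by_cases hxA : ∃ j ≤ k, x ∈ A j
      · exact .inl (hx hxA)
      · push Not at hxA
        right
        rw [hτ0 x hxA]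
        exact Nat.zero_le _
    have h1 := Finset.card_le_card hsub
    rw [Finset.card_sdiff_of_subset (Finset.subset_univ _), Finset.card_sdiff_of_subset hEsub,
      Finset.card_univ, Fintype.card_fin, hEcard] at h1
    have h2 : ((Finset.univ.filter (· ≤ k)).biUnion A).card ≤
        ∑ j ∈ Finset.univ.filter (· ≤ k), (A j).card := Finset.card_biUnion_le
    have h3 := Finset.card_le_univ ((Finset.univ.filter (· ≤ k)).biUnion A)
    rw [Fintype.card_fin] at h3
    have h4 := Finset.card_le_card hEsub
    rw [hEcard] at h4
    have h5 : ∑ j ∈ Finset.univ.filter (· ≤ k), (A j).card +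
      ∑ j ∈ Finset.univ.filter (fun j => ¬ j ≤ k), (A j).card = ∑ j, (A j).card :=
      Finset.sum_filter_add_sum_filter_not _ _ _
    have h6 : (Finset.univ.filter (fun j : Fin m => ¬ j ≤ k)).card = m - 1 - k := by
      have : Finset.univ.filter (fun j : Fin m => ¬ j ≤ k) = Finset.Ioi k := by
        ext j; simp
      rw [this, Fin.card_Ioi]
    have h7 : m - 1 - k ≤ ∑ j ∈ Finset.univ.filter (fun j => ¬ j ≤ k), (A j).card := by
      by_cases hm : m = 1
      · omega
      · rw [← h6, Finset.card_eq_sum_ones]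
        exact Finset.sum_le_sum fun j _ => (hne hm j).card_pos
    have := k.2
    omega
  · intro b
    have hmid : (b ∈ D k ∧ (∀ j < k, b ∉ D j) ∧ ∀ x ∉ E, min (b x) (τ x) = min (a x) (τ x)) ↔
        (∀ j < k, t j ≤ b (e j)) ∧ ∀ x ∉ E, min (b x) (τ x) = min (a x) (τ x) := by
      constructor
      · rintro ⟨_, h2, h3⟩
        exact ⟨fun j hj => (ht j hj b h3).mp (h2 j hj), h3⟩
      · rintro ⟨h2, h3⟩
        refine ⟨?_, fun j hj => (ht j hj b h3).mpr (h2 j hj), h3⟩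
        refine (hD k).1 a b (fun x hx => ?_) hak
        have h4 := h3 x (hEk x hx)
        rw [hτN x k le_rfl hx] at h4
        have := hN k a hak x hx
        omega
    rw [hmid]
    constructor
    · rintro ⟨h2, h3⟩
      refine ⟨fun x => ?_, fun x hx => ?_⟩
      · rw [hu]
        split_ifs with hxE
        · refine Finset.sup_le fun j hj => ?_
          simp only [Finset.mem_filter, Finset.mem_univ, true_and] at hj
          rw [← hj.2]; exact h2 j hj.1
        · rw [← h3 x hxE]; exact min_le_left _ _
      · simp only [Finset.mem_filter, Finset.mem_univ, true_and, not_or] at hx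
        rw [hu, if_neg hx.1]
        have := h3 x hx.1
        omega
    · rintro ⟨h2, h3⟩
      refine ⟨fun j hj => ?_, fun x hx => ?_⟩
      · refine le_trans ?_ (h2 (e j))
        rw [hu, if_pos (heE j hj)]
        exact Finset.le_sup (f := t) (by simp [hj])
      · have h4 := h2 x
        have h5 := h3 x
        simp only [Finset.mem_filter, Finset.mem_univ, true_and, not_or] at h5
        rw [hu, if_neg hx] at h4 h5
        by_cases h6 : τ x ≤ a x
        · omega
        · have := h5 ⟨hx, h6⟩
          omega

theorem partition_exists (A : Fin m → Finset (Fin n)) (D : Fin m → LowerSet (Fin n →₀ ℕ))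
    (hD : ∀ i, Cyl (A i) (D i)) (h0 : ∀ i, 0 ∈ D i)
    (hdisj : ∀ i j, i ≠ j → Disjoint (A i) (A j))
    (hne : m ≠ 1 → ∀ i, (A i).Nonempty) (hm : 0 < m)
    (d : ℕ) (hd : d + ∑ i, (A i).card + 1 ≤ n + m) :
    ∃ (ι : Type) (_ : Fintype ι) (_ : Nonempty ι) (u : ι → (Fin n →₀ ℕ)) (Z : ι → Finset (Fin n)),
      (∀ a, (∃ i, a ∈ D i) ↔ ∃ i, Piece (u i) (Z i) a) ∧
      (∀ a i j, Piece (u i) (Z i) a → Piece (u j) (Z j) a → i = j) ∧ ∀ i, d ≤ (Z i).card := by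
  classical
  obtain ⟨e, he⟩ | hn : (∃ e : Fin m → Fin n, ∀ j k : Fin m, j < k → e j ∈ A j) ∨
      (n = 0 ∧ m = 1) := by
    by_cases h1 : m = 1
    · rcases Nat.eq_zero_or_pos n with hn | hn
      · exact .inr ⟨hn, h1⟩
      · refine .inl ⟨fun _ => ⟨0, hn⟩, fun j k hjk => ?_⟩
        have := j.2
        have := k.2
        have : (j : ℕ) < k := hjk
        omega
    · choose e he using hne h1
      exact .inl ⟨e, fun j _ _ => he j⟩
  swap
  · obtain ⟨rfl, rfl⟩ := hn
    refine ⟨Unit, inferInstance, inferInstance, fun _ => 0, fun _ => ∅, ?_, ?_, ?_⟩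
    · intro a
      have : a = 0 := Subsingleton.elim _ _
      subst this
      exact ⟨fun _ => ⟨(), le_rfl, fun _ _ => rfl⟩, fun _ => ⟨0, h0 0⟩⟩
    · intros; rfl
    · intro i; omega
  choose N0 hN0 using fun i => (hD i).2
  obtain ⟨N, hNN⟩ : ∃ N, ∀ i, N0 i ≤ N := ⟨Finset.univ.sup N0, fun i => Finset.le_sup (by simp)⟩
  have hN : ∀ i, ∀ a ∈ D i, ∀ x ∈ A i, a x < N :=
    fun i a ha x hx => lt_of_lt_of_le (hN0 i a ha x hx) (hNN i)
  let E : Fin m → Finset (Fin n) := fun k => (Finset.univ.filter (· < k)).image e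
  let τ : Fin m → Fin n → ℕ := fun k x => if ∃ j ≤ k, x ∈ A j then N else 0
  have hτle : ∀ k x, τ k x ≤ N := by
    intro k x
    simp only [τ]
    split_ifs
    · exact le_rfl
    · exact Nat.zero_le _
  let Lab : Fin m × (Fin n → Fin (N + 1)) → (Fin n →₀ ℕ) → Prop := fun l b =>
    (b ∈ D l.1 ∧ (∀ j < l.1, b ∉ D j)) ∧
      ∀ x, (l.2 x : ℕ) = if x ∈ E l.1 then 0 else min (b x) (τ l.1 x)
  have hlab : ∀ b, (∃ i, b ∈ D i) → ∃ l, Lab l b := by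
    intro b hb
    obtain ⟨k, hk⟩ := (Set.toFinite {i | b ∈ D i}).exists_minimal hb
    refine ⟨(k, fun x => ⟨if x ∈ E k then 0 else min (b x) (τ k x), ?_⟩), ⟨hk.1, ?_⟩, fun x => rfl⟩
    · have := hτle k x
      split_ifs <;> omega
    · intro j hj hbj
      exact absurd (hk.2 hbj hj.le) (not_le.mpr hj)
  have huniq : ∀ b l l', Lab l b → Lab l' b → l = l' := by
    rintro b ⟨k, c⟩ ⟨k', c'⟩ ⟨⟨h1, h2⟩, h3⟩ ⟨⟨h1', h2'⟩, h3'⟩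
    have hk : k = k' := by
      rcases lt_trichotomy k k' with h | h | h
      · exact absurd h1 (h2' k h)
      · exact h
      · exact absurd h1' (h2 k' h)
    subst hk
    have : c = c' := by
      funext x
      exact Fin.ext ((h3 x).trans (h3' x).symm)
    rw [this]
  have hpiece : ∀ l : {l // ∃ b, Lab l b}, ∃ (u : Fin n →₀ ℕ) (Z : Finset (Fin n)),
      d ≤ Z.card ∧ ∀ b, Lab l.1 b ↔ Piece u Z b := by
    rintro ⟨⟨k, c⟩, a, ⟨hak, haj⟩, hac⟩
    obtain ⟨u, Z, hZ, h⟩ := label_piece A D hD hdisj hne N hN e he d hd k (E k) rfl (τ k)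
      (fun x j hj hx => if_pos ⟨j, hj, hx⟩)
      (fun x hx => if_neg (by push Not; exact hx)) a hak haj
    refine ⟨u, Z, hZ, fun b => ?_⟩
    rw [← h b]
    change ((b ∈ D k ∧ (∀ j < k, b ∉ D j)) ∧
      ∀ x, (c x : ℕ) = if x ∈ E k then 0 else min (b x) (τ k x)) ↔ _
    rw [and_assoc]
    refine and_congr_right fun _ => and_congr_right fun _ => forall_congr' fun x => ?_
    have := hac x
    dsimp only at this
    rw [this]
    by_cases hx : x ∈ E k
    · simp [hx]
    · simp only [hx, if_false, not_false_eq_true, forall_true_left]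
      exact eq_comm
  choose u Z hZ hpiece using hpiece
  refine ⟨{l // ∃ b, Lab l b}, Fintype.ofFinite _, ?_, u, Z, ?_, ?_, hZ⟩
  · obtain ⟨l, hl⟩ := hlab 0 ⟨⟨0, hm⟩, h0 _⟩
    exact ⟨⟨l, 0, hl⟩⟩
  · intro a
    constructor
    · intro ha
      obtain ⟨l, hl⟩ := hlab a ha
      exact ⟨⟨l, a, hl⟩, (hpiece ⟨l, a, hl⟩ a).mp hl⟩
    · rintro ⟨l, hl⟩
      have := (hpiece l a).mpr hl
      exact ⟨_, this.1.1⟩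
  · intro a i j hi hj
    exact Subtype.ext (huniq a _ _ ((hpiece i a).mpr hi) ((hpiece j a).mpr hj))

end Partition

section Final

open MvPolynomial

universe u

variable {K : Type u} [Field K]

theorem coeff_stanleySpace {σ : Type} {v : σ →₀ ℕ} {Z : Finset σ} {f : MvPolynomial σ K}
    (hf : f ∈ stanleySpace K v (Z : Set σ)) (a : σ →₀ ℕ) (ha : ¬ Piece v Z a) :
    coeff a f = 0 := by
  classical
  unfold stanleySpace at hf
  induction hf using Submodule.span_induction with
  | mem f hf =>
    obtain ⟨w, hw, rfl⟩ := hf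
    change coeff a (monomial (v + w) (1 : K)) = 0
    rw [coeff_monomial, if_neg]
    rintro rfl
    refine ha ⟨le_self_add, fun x hx => ?_⟩
    have : x ∉ w.support := fun h => hx (hw h)
    rw [Finsupp.notMem_support_iff] at this
    simp [this]
  | zero => simp
  | add f g _ _ hf hg => rw [coeff_add, hf, hg, add_zero]
  | smul c f _ hf => rw [coeff_smul, hf, smul_zero]

theorem monomial_mem_stanleySpace {σ : Type} {v : σ →₀ ℕ} {Z : Finset σ} {a : σ →₀ ℕ}
    (ha : Piece v Z a) (c : K) : monomial a c ∈ stanleySpace K v (Z : Set σ) := by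
  have h : (monomial a c : MvPolynomial σ K) = c • monomial (v + (a - v)) 1 := by
    rw [add_tsub_cancel_of_le ha.1, smul_monomial, smul_eq_mul, mul_one]
  rw [h]
  refine Submodule.smul_mem _ _ (Submodule.subset_span ⟨a - v, ?_, rfl⟩)
  intro x hx
  by_contra hxZ
  have h1 := ha.2 x hxZ
  rw [Finset.mem_coe, Finsupp.mem_support_iff, Finsupp.tsub_apply, h1, Nat.sub_self] at hx
  exact hx rfl

theorem stanley_of_partition {σ : Type} {ι : Type} [Fintype ι] (D : LowerSet (σ →₀ ℕ))
    (v : ι → (σ →₀ ℕ)) (Z : ι → Finset σ) (h1 : ∀ a, a ∈ D ↔ ∃ i, Piece (v i) (Z i) a)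
    (h2 : ∀ a i j, Piece (v i) (Z i) a → Piece (v j) (Z j) a → i = j) :
    IsStanleyDecompOfQuotient (IL K D) v Z := by
  refine ⟨fun i => ?_, ?_, ?_⟩
  · rw [Submodule.disjoint_def]
    intro f hf hf'
    ext a
    rw [coeff_zero]
    by_cases ha : Piece (v i) (Z i) a
    · exact hf' a ((h1 a).mpr ⟨i, ha⟩)
    · exact coeff_stanleySpace hf a ha
  · intro i
    rw [Submodule.disjoint_def]
    intro y hy hy'
    obtain ⟨f, hf, rfl⟩ := hy
    have e : (⨆ j, ⨆ (_ : j ≠ i), (stanleySpace K (v j) (Z j : Set σ)).map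
        (Ideal.Quotient.mkₐ K (IL K D)).toLinearMap) =
        (⨆ j, ⨆ (_ : j ≠ i), stanleySpace K (v j) (Z j : Set σ)).map
        (Ideal.Quotient.mkₐ K (IL K D)).toLinearMap := by
      simp only [Submodule.map_iSup]
    rw [e] at hy'
    obtain ⟨g, hg, hgf⟩ := hy'
    have hg' : ∀ a, Piece (v i) (Z i) a → coeff a g = 0 := by
      intro a ha
      let T : Submodule K (MvPolynomial σ K) :=
        { carrier := {g | coeff a g = 0}
          add_mem' := by
            intro p q hp hq
            change coeff a (p + q) = 0
            rw [coeff_add, hp, hq, add_zero]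
          zero_mem' := coeff_zero a
          smul_mem' := by
            intro c p hp
            change coeff a (c • p) = 0
            rw [coeff_smul, hp, smul_zero] }
      have hT : (⨆ j, ⨆ (_ : j ≠ i), stanleySpace K (v j) (Z j : Set σ)) ≤ T := by
        refine iSup_le fun j => iSup_le fun hj p hp => ?_
        exact coeff_stanleySpace hp a fun hja => hj (h2 a j i hja ha)
      exact hT hg
    have hfg : g - f ∈ IL K D := Ideal.Quotient.eq.mp hgf
    have hf0 : f = 0 := by
      ext a
      rw [coeff_zero]
      by_cases ha : Piece (v i) (Z i) a
      · have := hfg a ((h1 a).mpr ⟨i, ha⟩)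
        rw [coeff_sub, hg' a ha, zero_sub, neg_eq_zero] at this
        exact this
      · exact coeff_stanleySpace hf a ha
    rw [hf0, map_zero]
  · rw [eq_top_iff]
    rintro y -
    obtain ⟨f, rfl⟩ := Ideal.Quotient.mk_surjective y
    rw [f.as_sum, map_sum]
    refine Submodule.sum_mem _ fun a _ => ?_
    by_cases ha : a ∈ D
    · obtain ⟨i, hi⟩ := (h1 a).mp ha
      refine Submodule.mem_iSup_of_mem i ?_
      exact ⟨_, monomial_mem_stanleySpace hi _, rfl⟩
    · have : Ideal.Quotient.mk (IL K D) (monomial a (coeff a f)) = 0 := by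
        classical
        rw [Ideal.Quotient.eq_zero_iff_mem]
        intro b hb
        rw [coeff_monomial, if_neg]
        rintro rfl; exact ha hb
      rw [this]
      exact Submodule.zero_mem _

theorem le_sdepthQuot {n : ℕ} {I : Ideal (MvPolynomial (Fin n) K)} {d : ℕ}
    (h : ∃ (ι : Type) (_ : Fintype ι) (_ : Nonempty ι) (u : ι → (Fin n →₀ ℕ))
      (Z : ι → Finset (Fin n)), IsStanleyDecompOfQuotient I u Z ∧ ∀ i, d ≤ (Z i).card) :
    d ≤ sdepthQuot I := by
  refine le_csSup ⟨n, ?_⟩ h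
  rintro c ⟨ι, _, ⟨i⟩, u, Z, _, hc⟩
  refine (hc i).trans ((Finset.card_le_univ _).trans ?_)
  simp

/-- exponents of monomials outside of `Q` -/
def outMon {σ : Type} (Q : Ideal (MvPolynomial σ K)) : LowerSet (σ →₀ ℕ) where
  carrier := {a | (monomial a (1 : K) : MvPolynomial σ K) ∉ Q}
  lower' := by
    intro a b hba ha hb
    apply ha
    have : (monomial a (1 : K) : MvPolynomial σ K) = monomial (a - b) 1 * monomial b 1 := by
      rw [monomial_mul, tsub_add_cancel_of_le hba, one_mul]
    rw [this]
    exact Ideal.mul_mem_left _ _ hb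

theorem mem_outMon {σ : Type} {Q : Ideal (MvPolynomial σ K)} {a : σ →₀ ℕ} :
    a ∈ outMon Q ↔ (monomial a (1 : K) : MvPolynomial σ K) ∉ Q := Iff.rfl

theorem cyl_outMon {σ : Type} {Q : Ideal (MvPolynomial σ K)} (hQ : Q.IsPrimary) (A : Finset σ)
    (hA : Q.radical = Ideal.span ((fun j => (X j : MvPolynomial σ K)) '' (A : Set σ))) :
    Cyl A (outMon Q) := by
  classical
  have hnot : ∀ c : σ →₀ ℕ, (∀ x ∈ A, c x = 0) →
      (monomial c (1 : K) : MvPolynomial σ K) ∉ Q.radical := by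
    intro c hc h
    rw [hA] at h
    have h' := (mem_ideal_span_X_image (s := (A : Set σ))).mp h c (by
      rw [mem_support_iff, coeff_monomial, if_pos rfl]; exact one_ne_zero)
    obtain ⟨x, hx, hcx⟩ := h'
    exact hcx (hc x hx)
  have hres : ∀ a : σ →₀ ℕ, (monomial a (1 : K) : MvPolynomial σ K) ∈ Q ↔
      (monomial (a.filter (· ∈ A)) (1 : K) : MvPolynomial σ K) ∈ Q := by
    intro a
    have hsplit : (monomial a (1 : K) : MvPolynomial σ K) =
        monomial (a.filter (· ∈ A)) 1 * monomial (a.filter (fun x => ¬ x ∈ A)) 1 := by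
      rw [monomial_mul, Finsupp.filter_add_filter_not, one_mul]
    rw [hsplit]
    constructor
    · intro h
      refine ((Ideal.isPrimary_iff.mp hQ).2 h).resolve_right (hnot _ fun x hx => ?_)
      simp [hx]
    · intro h
      exact Ideal.mul_mem_right _ _ h
  refine ⟨fun a b hab ha => ?_, ?_⟩
  · rw [mem_outMon, hres] at ha ⊢
    have : b.filter (· ∈ A) = a.filter (· ∈ A) := by
      ext x
      simp only [Finsupp.filter_apply]
      split_ifs with hx
      · exact (hab x hx).symm
      · rfl
    rwa [this]
  · have hx : ∀ x : σ, ∃ N, x ∈ A → (X x : MvPolynomial σ K) ^ N ∈ Q := by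
      intro x
      by_cases hx : x ∈ A
      · have : (X x : MvPolynomial σ K) ∈ Q.radical := by
          rw [hA]; exact Ideal.subset_span ⟨x, hx, rfl⟩
        obtain ⟨N, hN⟩ := this
        exact ⟨N, fun _ => hN⟩
      · exact ⟨0, fun h => absurd h hx⟩
    choose N hN using hx
    refine ⟨A.sup N, fun a ha x hx => ?_⟩
    by_contra! hle
    apply ha
    have h1 : N x ≤ a x := (Finset.le_sup hx).trans hle
    have h2 : Finsupp.single x (N x) ≤ a := by
      rw [Finsupp.single_le_iff]; exact h1
    have : (monomial a (1 : K) : MvPolynomial σ K) =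
        monomial (a - Finsupp.single x (N x)) 1 * X x ^ N x := by
      rw [X_pow_eq_monomial, monomial_mul, tsub_add_cancel_of_le h2, one_mul]
    rw [this]
    exact Ideal.mul_mem_left _ _ (hN x hx)

theorem monomialIdeal_mem {σ : Type} {I : Ideal (MvPolynomial σ K)} (hI : IsMonomialIdeal I)
    (f : MvPolynomial σ K) :
    f ∈ I ↔ ∀ a ∈ f.support, (monomial a (1 : K) : MvPolynomial σ K) ∈ I := by
  classical
  constructor
  · obtain ⟨A, rfl⟩ := hI
    intro hf a ha
    rw [mem_ideal_span_monomial_image] at hf ⊢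
    intro b hb
    have : b = a := by
      have := support_monomial_subset hb
      simpa using this
    rw [this]
    exact hf a ha
  · intro h
    rw [f.as_sum]
    refine Ideal.sum_mem _ fun a ha => ?_
    have : (monomial a (coeff a f) : MvPolynomial σ K) = C (coeff a f) * monomial a 1 := by
      rw [C_mul_monomial, mul_one]
    rw [this]
    exact Ideal.mul_mem_left _ _ (h a ha)

theorem DGE_mdepth {n : ℕ} {I : Ideal (MvPolynomial (Fin n) K)}
    {D : LowerSet (Fin n →₀ ℕ)} (hI : I = IL K D) {b : ℕ} (h : ∀ t, LD K D t → t ≤ b) :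
    mdepth K (Fin n) ((MvPolynomial (Fin n) K) ⧸ I) ≤ b := by
  subst hI
  unfold mdepth
  rcases Set.eq_empty_or_nonempty {k | ∃ rs : List (MvPolynomial (Fin n) K), rs.length = k ∧
    (∀ r ∈ rs, r ∈ Ideal.span (Set.range (X : Fin n → MvPolynomial (Fin n) K))) ∧
    RingTheory.Sequence.IsRegular ((MvPolynomial (Fin n) K) ⧸ IL K D) rs} with h0 | h0
  · rw [h0]; simp
  · refine csSup_le h0 ?_
    rintro k ⟨rs, rfl, hrs, hreg⟩
    exact h _ (DGE.of_isWeaklyRegular rs (fun r hr y => resF_smul (hrs r hr) y) _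
      hreg.toIsWeaklyRegular)

end Final

/-- If `I = Q_1 ∩ … ∩ Q_m` is a reduced primary decomposition with `P_i = √Q_i` and
`G(P_i) ∩ G(P_j) = ∅` for `i ≠ j`, then `sdepth S/I ≥ m - 1`; in particular
`sdepth S/I ≥ depth S/I` (Stanley's conjecture holds for `S/I`). -/
theorem sdepth_quot_ge_of_disjoint_primary_decomposition {K : Type*} [Field K] {n m : ℕ}
    (I : Ideal (MvPolynomial (Fin n) K)) (hI : IsMonomialIdeal I)
    (Q : Fin m → Ideal (MvPolynomial (Fin n) K))
    (hdecomp : I = ⨅ i, Q i)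
    (hprimary : ∀ i, (Q i).IsPrimary)
    (hirred : ∀ i, ¬ (⨅ j, ⨅ (_ : j ≠ i), Q j) ≤ Q i)
    (P : Fin m → Ideal (MvPolynomial (Fin n) K))
    (hrad : ∀ i, P i = (Q i).radical)
    (hdistinct : ∀ i j, i ≠ j → P i ≠ P j)
    (A : Fin m → Finset (Fin n))
    (hP : ∀ i, P i = Ideal.span
      ((fun j => (X j : MvPolynomial (Fin n) K)) '' (A i : Set (Fin n))))
    (hdisj : ∀ i j, i ≠ j → Disjoint (A i) (A j)) :
    m - 1 ≤ sdepthQuot I ∧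
      mdepth K (Fin n) ((MvPolynomial (Fin n) K) ⧸ I) ≤ sdepthQuot I := by
  classical
  have hID : I = IL K (Finset.univ.sup fun i => outMon (Q i)) := by
    ext f
    rw [monomialIdeal_mem hI, mem_IL]
    have hmem : ∀ a, a ∈ (Finset.univ.sup fun i => outMon (Q i)) ↔
        (monomial a (1 : K) : MvPolynomial (Fin n) K) ∉ I := by
      intro a
      rw [Finset.sup_univ_eq_iSup, LowerSet.mem_iSup_iff, hdecomp, Ideal.mem_iInf]
      push Not
      rfl
    constructor
    · intro h a ha
      by_contra hne
      exact (hmem a).mp ha (h a (mem_support_iff.mpr hne))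
    · intro h a ha
      by_contra hne
      exact mem_support_iff.mp ha (h a ((hmem a).mpr hne))
  have hcyl : ∀ i, Cyl (A i) (outMon (Q i)) := fun i =>
    cyl_outMon (hprimary i) (A i) (by rw [← hrad, hP])
  have h0 : ∀ i, 0 ∈ outMon (Q i) := by
    intro i h
    exact (Ideal.isPrimary_iff.mp (hprimary i)).1 ((Ideal.eq_top_iff_one _).mpr h)
  have hne : m ≠ 1 → ∀ i, (A i).Nonempty := by
    intro hm i
    rw [Finset.nonempty_iff_ne_empty]
    intro hA
    obtain ⟨j, hj⟩ : ∃ j, j ≠ i := by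
      have hi := i.2
      by_cases h : i.val = 0
      · exact ⟨⟨1, by omega⟩, fun hc => by rw [← hc] at h; simp at h⟩
      · exact ⟨⟨0, by omega⟩, fun hc => by rw [← hc] at h; simp at h⟩
    apply hirred j
    have hPi : (Q i).radical = ⊥ := by
      rw [← hrad, hP, hA]; simp
    have hQi : Q i ≤ Q j := by
      have : Q i ≤ ⊥ := hPi ▸ Ideal.le_radical
      exact this.trans bot_le
    exact (iInf_le_of_le i (iInf_le _ hj.symm)).trans hQi
  rcases Nat.eq_zero_or_pos m with hm | hm
  · subst hm
    refine ⟨Nat.zero_le _, ?_⟩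
    have hI1 : I = ⊤ := by rw [hdecomp]; simp
    have hempty : mdepth K (Fin n) ((MvPolynomial (Fin n) K) ⧸ I) = 0 := by
      unfold mdepth
      refine Eq.trans (congrArg sSup ?_) (csSup_empty (α := ℕ))
      rw [Set.eq_empty_iff_forall_notMem]
      rintro k ⟨rs, -, -, hreg⟩
      have := hreg.nontrivial
      exact not_subsingleton (MvPolynomial (Fin n) K ⧸ I)
        (Ideal.Quotient.subsingleton_iff.mpr hI1)
    rw [hempty]
    exact Nat.zero_le _
  have hsum : ∑ i, (A i).card ≤ n := by
    rw [← Finset.card_biUnion (fun i _ j _ hij => hdisj i j hij)]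
    simpa using Finset.card_le_univ (Finset.univ.biUnion A)
  have hd : n + m - 1 - (∑ i, (A i).card) ≤ sdepthQuot I := by
    obtain ⟨ι, hι, hι', v, Z, h1, h2, h3⟩ := partition_exists A (fun i => outMon (Q i)) hcyl h0
      hdisj hne hm (n + m - 1 - (∑ i, (A i).card)) (by omega)
    refine le_sdepthQuot ⟨ι, hι, hι', v, Z, ?_, h3⟩
    rw [hID]
    refine stanley_of_partition _ v Z (fun a => ?_) h2
    rw [← h1 a, Finset.sup_univ_eq_iSup, LowerSet.mem_iSup_iff]
  refine ⟨le_trans (by omega) hd, le_trans (DGE_mdepth hID fun t ht => ?_) hd⟩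
  have hu := multi_upper (K := K) A (fun i => outMon (Q i)) hcyl h0 hdisj Finset.univ
    ⟨⟨0, hm⟩, Finset.mem_univ _⟩ (fun hc i _ => hne (by simpa using hc) i) ∅ ⊤ t
    ⟨fun _ _ _ _ => trivial, 0, fun a _ x hx => absurd hx (Finset.notMem_empty x)⟩ trivial
    (fun i _ => Finset.disjoint_empty_left _) (by rw [top_inf_eq]; exact ht)
  simp only [Finset.card_empty, Finset.card_univ, Fintype.card_fin] at hu
  omega
end

section
/- Let 1 ≤ r ≤ e ≤ q be positive integers with r + e + q = n, let P_1 = (x_1,…,x_r), P_2 = (x_{r+1},…,x_{r+e}), P_3 = (x_{r+e+1},…,x_{r+e+q}) be prime ideals of S = K[x_1,…,x_n], and let I = P_1 ∩ P_2 ∩ P_3. Then sdepth_S(S/I) ≥ min{ r + e, r + ⌈q/2⌉, ⌈e/2⌉ + ⌈q/2⌉ }. -/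
open MvPolynomial

section Cyc
open Classical in
theorem cyc_unique {n : ℕ} [NeZero n] (A : Finset (ZMod n)) (hA : A.Nonempty) (V W : Finset (ZMod n))
    (hV : ∀ i, i + 1 ∈ V ↔ (i ∈ A ∨ i ∉ V)) (hW : ∀ i, i + 1 ∈ W ↔ (i ∈ A ∨ i ∉ W)) : V = W := by
  have key : ∀ k : ℕ, ∀ i : ZMod n, i - 1 - (k : ZMod n) ∈ A → (i ∈ V ↔ i ∈ W) := by
    intro k
    induction k with
    | zero =>
      intro i hi
      have h1 := hV (i - 1)
      have h2 := hW (i - 1)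
      simp only [sub_add_cancel, Nat.cast_zero, sub_zero] at h1 h2 hi
      tauto
    | succ k ih =>
      intro i hi
      have h1 := hV (i - 1)
      have h2 := hW (i - 1)
      have h3 := ih (i - 1) (by convert hi using 1; push_cast; ring)
      simp only [sub_add_cancel] at h1 h2
      tauto
  obtain ⟨a, ha⟩ := hA
  ext i
  apply key (i - 1 - a).val i
  rw [ZMod.natCast_zmod_val]
  simpa using ha

open Classical in
theorem cyc_exists {n : ℕ} [NeZero n] (A : Finset (ZMod n)) (hA : A.Nonempty) :
    ∃ V : Finset (ZMod n), ∀ i, i + 1 ∈ V ↔ (i ∈ A ∨ i ∉ V) := by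
  obtain ⟨a, ha⟩ := hA
  have hex : ∀ i : ZMod n, ∃ k : ℕ, i - 1 - (k : ZMod n) ∈ A := by
    intro i
    refine ⟨(i - 1 - a).val, ?_⟩
    rw [ZMod.natCast_zmod_val]
    simpa using ha
  refine ⟨Finset.univ.filter (fun i => Even (Nat.find (hex i))), fun i => ?_⟩
  simp only [Finset.mem_filter, Finset.mem_univ, true_and]
  by_cases hi : i ∈ A
  · have : Nat.find (hex (i + 1)) = 0 := by
      rw [Nat.find_eq_zero]; simpa using hi
    simp only [hi, true_or, iff_true]
    rw [this]
    exact Even.zero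
  · have : Nat.find (hex (i + 1)) = Nat.find (hex i) + 1 := by
      rw [Nat.find_eq_iff]
      constructor
      · have := Nat.find_spec (hex i)
        convert this using 1; push_cast; ring
      · intro m hm
        cases m with
        | zero => simpa using hi
        | succ m =>
          have := Nat.find_min (hex i) (m := m) (by omega)
          intro h; apply this
          convert h using 1; push_cast; ring
    rw [this, Nat.even_add_one]; simp [hi]

open Classical in
theorem cyc_count {n : ℕ} [NeZero n] (A V : Finset (ZMod n))
    (hV : ∀ i, i + 1 ∈ V ↔ (i ∈ A ∨ i ∉ V)) :
    n = (V ∩ A).card + 2 * Vᶜ.card ∧ (A ∪ Vᶜ).card = (V ∩ A).card + Vᶜ.card := by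
  have h1 : (V \ A).card = Vᶜ.card := by
    apply Finset.card_bij (fun i _ => i + 1)
    · intro i hi
      have := hV i
      simp at hi ⊢; tauto
    · intro i _ j _ h; simpa using h
    · intro j hj
      refine ⟨j - 1, ?_, by ring⟩
      have := hV (j - 1)
      simp at hj this ⊢; tauto
  have h2 := Finset.card_inter_add_card_sdiff V A
  have h3 := Finset.card_add_card_compl V
  rw [ZMod.card] at h3
  constructor
  · omega
  · rw [← Finset.card_union_of_disjoint]
    · congr 1; ext i; simp; tauto
    · rw [Finset.disjoint_left]; intro i; simp; tauto

theorem odd_zmod {n : ℕ} [NeZero n] (hn : Odd n) : ∃ f g : Finset (ZMod n) → Finset (ZMod n),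
    ∀ A, A.Nonempty → f A ⊆ A ∧ A ⊆ g A ∧ (f A).Nonempty ∧ (n + 1) / 2 ≤ (g A).card ∧
      ∀ B, f A ⊆ B → B ⊆ g A → f B = f A ∧ g B = g A := by
  classical
  have : ∀ A : Finset (ZMod n), ∃ V : Finset (ZMod n), A.Nonempty →
      ∀ i, i + 1 ∈ V ↔ (i ∈ A ∨ i ∉ V) := by
    intro A
    by_cases hA : A.Nonempty
    · obtain ⟨V, hV⟩ := cyc_exists A hA
      exact ⟨V, fun _ => hV⟩
    · exact ⟨∅, fun h => absurd h hA⟩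
  choose V hV using this
  refine ⟨fun A => V A ∩ A, fun A => A ∪ (V A)ᶜ, fun A hA => ?_⟩
  have hc := cyc_count A (V A) (hV A hA)
  have hne : (V A ∩ A).Nonempty := by
    rw [← Finset.card_pos]
    obtain ⟨k, hk⟩ := hn
    omega
  refine ⟨Finset.inter_subset_right, Finset.subset_union_left, hne, by simp only; omega, ?_⟩
  intro B h1 h2
  have hag : ∀ i, i ∈ V A → (i ∈ B ↔ i ∈ A) := by
    intro i hi
    constructor
    · intro hb
      have := h2 hb
      simp at this; tauto
    · intro ha; exact h1 (by simp [hi, ha])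
  have hB : B.Nonempty := hne.mono h1
  have hVV : V B = V A := by
    apply cyc_unique B hB _ _ (hV B hB)
    intro i
    have := hV A hA i
    have := hag i
    tauto
  simp only [hVV]
  constructor
  · ext i; have := hag i; simp; tauto
  · ext i; have := hag i; simp; tauto

theorem odd_block {σ : Type*} [DecidableEq σ] (C : Finset σ) (hC : Odd C.card) :
    ∃ f g : Finset σ → Finset σ,
    ∀ A, A ⊆ C → A.Nonempty → f A ⊆ A ∧ A ⊆ g A ∧ g A ⊆ C ∧ (f A).Nonempty ∧
      (C.card + 1) / 2 ≤ (g A).card ∧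
      ∀ B, f A ⊆ B → B ⊆ g A → f B = f A ∧ g B = g A := by
  have : NeZero C.card := ⟨by rintro h; rw [h] at hC; simp at hC⟩
  obtain ⟨f, g, h⟩ := odd_zmod hC
  have e : C ≃ ZMod C.card := Fintype.equivOfCardEq (by simp [ZMod.card])
  let φ : ZMod C.card ↪ σ := e.symm.toEmbedding.trans (Function.Embedding.subtype _)
  have hφ : ∀ i, φ i ∈ C := fun i => (e.symm i).2
  have hφs : ∀ c ∈ C, ∃ i, φ i = c := fun c hc => ⟨e ⟨c, hc⟩, by simp [φ]⟩
  let p : Finset σ → Finset (ZMod C.card) := fun A => A.preimage φ φ.injective.injOn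
  have hp : ∀ A, A ⊆ C → (p A).map φ = A := by
    intro A hA
    ext a
    simp only [p, Finset.mem_map, Finset.mem_preimage]
    constructor
    · rintro ⟨i, hi, rfl⟩; exact hi
    · intro ha
      obtain ⟨i, rfl⟩ := hφs a (hA ha)
      exact ⟨i, ha, rfl⟩
  have hmapC : ∀ s : Finset (ZMod C.card), s.map φ ⊆ C := by
    intro s a ha
    obtain ⟨i, _, rfl⟩ := Finset.mem_map.1 ha
    exact hφ i
  refine ⟨fun A => (f (p A)).map φ, fun A => (g (p A)).map φ, fun A hA hne => ?_⟩
  have hpne : (p A).Nonempty := by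
    rw [← Finset.map_nonempty (f := φ), hp A hA]; exact hne
  obtain ⟨h1, h2, h3, h4, h5⟩ := h (p A) hpne
  refine ⟨?_, ?_, hmapC _, by simpa using h3, by simpa using h4, ?_⟩
  · conv_rhs => rw [← hp A hA]
    simpa using h1
  · conv_lhs => rw [← hp A hA]
    simpa using h2
  · intro B hB1 hB2
    have hBC := hB2.trans (hmapC _)
    rw [← hp B hBC] at hB1 hB2
    have := h5 (p B) (by simpa using hB1) (by simpa using hB2)
    simp [this]

theorem any_block {σ : Type*} [DecidableEq σ] (C : Finset σ) :
    ∃ f g : Finset σ → Finset σ,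
    ∀ A, A ⊆ C → A.Nonempty → f A ⊆ A ∧ A ⊆ g A ∧ g A ⊆ C ∧ (f A).Nonempty ∧
      (C.card + 1) / 2 ≤ (g A).card ∧
      ∀ B, f A ⊆ B → B ⊆ g A → f B = f A ∧ g B = g A := by
  rcases Nat.even_or_odd C.card with hC | hC
  swap
  · exact odd_block C hC
  rcases C.eq_empty_or_nonempty with rfl | ⟨c, hc⟩
  · refine ⟨id, id, fun A hA hne => ?_⟩
    rw [Finset.subset_empty] at hA
    simp [hA] at hne
  have hcard := Finset.card_erase_add_one hc
  obtain ⟨k, hk⟩ := hC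
  obtain ⟨f, g, h⟩ := odd_block (C.erase c) ⟨k - 1, by omega⟩
  refine ⟨fun A => if c ∈ A then {c} else f A, fun A => if c ∈ A then C else g A,
    fun A hA hne => ?_⟩
  by_cases hcA : c ∈ A
  · simp only [hcA, if_true]
    refine ⟨by simpa using hcA, hA, subset_rfl, by simp, by omega, ?_⟩
    intro B h1 h2
    have : c ∈ B := by simpa using h1
    simp [this]
  · simp only [hcA, if_false]
    have hA' : A ⊆ C.erase c := Finset.subset_erase.2 ⟨hA, hcA⟩
    obtain ⟨h1, h2, h3, h4, h5, h6⟩ := h A hA' hne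
    refine ⟨h1, h2, h3.trans (Finset.erase_subset _ _), h4, by omega, ?_⟩
    intro B hB1 hB2
    have : c ∉ B := fun hh => by simpa using h3 (hB2 hh)
    simpa [this] using h6 B hB1 hB2

/-- Three block interval partition. -/
theorem three_blocks {σ : Type*} [DecidableEq σ] (B₁ B₂ B₃ : Finset σ)
    (h12 : Disjoint B₁ B₂) (h13 : Disjoint B₁ B₃) (h23 : Disjoint B₂ B₃)
    (hall : ∀ i, i ∈ B₁ ∨ i ∈ B₂ ∨ i ∈ B₃) (d : ℕ)
    (hd1 : d ≤ B₁.card + B₂.card) (hd2 : d ≤ B₁.card + (B₃.card + 1) / 2)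
    (hd3 : d ≤ (B₂.card + 1) / 2 + (B₃.card + 1) / 2) :
    ∃ f g : Finset σ → Finset σ, ∀ A,
      (Disjoint A B₁ ∨ Disjoint A B₂ ∨ Disjoint A B₃) →
      f A ⊆ A ∧ A ⊆ g A ∧ d ≤ (g A).card ∧ ∀ B, f A ⊆ B → B ⊆ g A →
        (Disjoint B B₁ ∨ Disjoint B B₂ ∨ Disjoint B B₃) ∧ f B = f A ∧ g B = g A := by
  obtain ⟨f₂, g₂, H₂⟩ := any_block B₂
  obtain ⟨f₃, g₃, H₃⟩ := any_block B₃
  refine ⟨fun A => if Disjoint A B₃ then ∅ else if Disjoint A B₂ then f₃ (A ∩ B₃) else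
      f₂ (A ∩ B₂) ∪ f₃ (A ∩ B₃),
    fun A => if Disjoint A B₃ then B₁ ∪ B₂ else if Disjoint A B₂ then B₁ ∪ g₃ (A ∩ B₃) else
      g₂ (A ∩ B₂) ∪ g₃ (A ∩ B₃), fun A hA => ?_⟩
  by_cases hA3 : Disjoint A B₃
  · simp only [hA3, if_true]
    refine ⟨by simp, ?_, by rwa [Finset.card_union_of_disjoint h12], ?_⟩
    · intro i hi
      have := hall i
      have := Finset.disjoint_left.1 hA3 hi
      simp; tauto
    · intro B _ hB
      have : Disjoint B B₃ := Finset.disjoint_of_subset_left hB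
        (Finset.disjoint_union_left.2 ⟨h13, h23⟩)
      simp [this]
  have hA3' : (A ∩ B₃).Nonempty := by rwa [Finset.not_disjoint_iff_nonempty_inter] at hA3
  obtain ⟨a1, a2, a3, a4, a5, a6⟩ := H₃ _ Finset.inter_subset_right hA3'
  have hd := Finset.disjoint_left.1 h12
  have hd' := Finset.disjoint_left.1 h13
  have hd'' := Finset.disjoint_left.1 h23
  by_cases hA2 : Disjoint A B₂
  · simp only [hA2, hA3, if_true, if_false]
    refine ⟨a1.trans Finset.inter_subset_left, ?_, ?_, ?_⟩
    · intro i hi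
      have h := hall i
      have := Finset.disjoint_left.1 hA2 hi
      have h3 := @a2 i
      simp [hi] at h3 ⊢; tauto
    · rw [Finset.card_union_of_disjoint (Finset.disjoint_of_subset_right a3 h13)]; omega
    · intro B hB1 hB2
      have hBd : Disjoint B B₂ := Finset.disjoint_of_subset_left hB2
        (Finset.disjoint_union_left.2 ⟨h12, Finset.disjoint_of_subset_left a3 h23.symm⟩)
      have hs : f₃ (A ∩ B₃) ⊆ B ∩ B₃ := fun i hi =>
        Finset.mem_inter.2 ⟨hB1 hi, a3 (a2 (a1 hi))⟩
      have hB3 : ¬ Disjoint B B₃ := by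
        rw [Finset.not_disjoint_iff_nonempty_inter]
        exact a4.mono hs
      have := a6 (B ∩ B₃) hs (by
        intro i hi
        rw [Finset.mem_inter] at hi
        have := hB2 hi.1
        rw [Finset.mem_union] at this
        rcases this with h | h
        · exact absurd hi.2 (hd' h)
        · exact h)
      simp [hBd, hB3, this]
  · have hA1 : Disjoint A B₁ := by tauto
    have hA2' : (A ∩ B₂).Nonempty := by rwa [Finset.not_disjoint_iff_nonempty_inter] at hA2
    obtain ⟨b1, b2, b3, b4, b5, b6⟩ := H₂ _ Finset.inter_subset_right hA2'
    simp only [hA2, hA3, if_false]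
    refine ⟨Finset.union_subset (b1.trans Finset.inter_subset_left)
      (a1.trans Finset.inter_subset_left), ?_, ?_, ?_⟩
    · intro i hi
      have h := hall i
      have := Finset.disjoint_left.1 hA1 hi
      have h3 := @a2 i
      have h2 := @b2 i
      simp [hi] at h3 h2 ⊢; tauto
    · rw [Finset.card_union_of_disjoint
        (Finset.disjoint_of_subset_right a3 (Finset.disjoint_of_subset_left b3 h23))]
      omega
    · intro B hB1 hB2
      have hBd : Disjoint B B₁ := Finset.disjoint_of_subset_left hB2
        (Finset.disjoint_union_left.2 ⟨Finset.disjoint_of_subset_left b3 h12.symm,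
          Finset.disjoint_of_subset_left a3 h13.symm⟩)
      have hs : f₃ (A ∩ B₃) ⊆ B ∩ B₃ := fun i hi =>
        Finset.mem_inter.2 ⟨hB1 (Finset.mem_union_right _ hi), a3 (a2 (a1 hi))⟩
      have ht : f₂ (A ∩ B₂) ⊆ B ∩ B₂ := fun i hi =>
        Finset.mem_inter.2 ⟨hB1 (Finset.mem_union_left _ hi), b3 (b2 (b1 hi))⟩
      have hB3 : ¬ Disjoint B B₃ := by
        rw [Finset.not_disjoint_iff_nonempty_inter]
        exact a4.mono hs
      have hB2n : ¬ Disjoint B B₂ := by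
        rw [Finset.not_disjoint_iff_nonempty_inter]
        exact b4.mono ht
      have e3 := a6 (B ∩ B₃) hs (by
        intro i hi
        rw [Finset.mem_inter] at hi
        have := hB2 hi.1
        rw [Finset.mem_union] at this
        rcases this with h | h
        · exact absurd hi.2 (hd'' (b3 h))
        · exact h)
      have e2 := b6 (B ∩ B₂) ht (by
        intro i hi
        rw [Finset.mem_inter] at hi
        have := hB2 hi.1
        rw [Finset.mem_union] at this
        rcases this with h | h
        · exact h
        · exact absurd (a3 h) (hd'' hi.2))
      simp [hBd, hB3, hB2n, e3, e2]

end Cyc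

section Alg

theorem mem_stanleySpace_iff {K σ : Type*} [Field K] [DecidableEq σ] (U Z : Finset σ)
    (hUZ : U ⊆ Z) (p : MvPolynomial σ K) :
    p ∈ stanleySpace K (Finsupp.indicator U (fun _ _ => 1)) (Z : Set σ) ↔
      ∀ a ∈ p.support, U ⊆ a.support ∧ a.support ⊆ Z := by
  have : stanleySpace K (Finsupp.indicator U (fun _ _ => 1)) (Z : Set σ) =
      restrictSupport K {a : σ →₀ ℕ | U ⊆ a.support ∧ a.support ⊆ Z} := by
    rw [restrictSupport_eq_span, stanleySpace]
    congr 1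
    ext x
    simp only [Set.mem_image, Set.mem_ofPred_eq]
    constructor
    · rintro ⟨v, hv, rfl⟩
      refine ⟨_, ⟨?_, ?_⟩, rfl⟩
      · intro i hi
        simp [Finsupp.indicator_apply, hi]
      · intro i hi
        by_contra hiZ
        have h1 : i ∉ U := fun h => hiZ (hUZ h)
        have h2 : v i = 0 := by
          by_contra h
          exact hiZ (by exact_mod_cast hv (by simpa using h))
        simp [Finsupp.indicator_apply, h1, h2] at hi
    · rintro ⟨a, ⟨h1, h2⟩, rfl⟩
      refine ⟨a - Finsupp.indicator U (fun _ _ => 1), ?_, ?_⟩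
      · intro i hi
        have : a i ≠ 0 := by
          intro h
          simp [h] at hi
        exact_mod_cast h2 (by simpa using this)
      · rw [add_tsub_cancel_of_le]
        intro i
        by_cases hi : i ∈ U
        · have := h1 hi
          simp [Finsupp.indicator_apply, hi] at this ⊢
          omega
        · simp [Finsupp.indicator_apply, hi]
  rw [this, mem_restrictSupport_iff]
  rfl

theorem le_sdepthQuot_of_partition {K : Type*} [Field K] {n : ℕ}
    (I : Ideal (MvPolynomial (Fin n) K)) (F : Finset (Fin n) → Prop)
    (hI : ∀ p, p ∈ I ↔ ∀ a ∈ p.support, ¬ F a.support) (hF : F ∅) (d : ℕ)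
    (f g : Finset (Fin n) → Finset (Fin n))
    (h : ∀ A, F A → f A ⊆ A ∧ A ⊆ g A ∧ d ≤ (g A).card ∧ ∀ B, f A ⊆ B → B ⊆ g A →
        F B ∧ f B = f A ∧ g B = g A) : d ≤ sdepthQuot I := by
  classical
  unfold sdepthQuot
  apply le_csSup
  · refine ⟨n, ?_⟩
    rintro d ⟨ι, _, ⟨i⟩, u, Z, _, hd⟩
    exact (hd i).trans ((Finset.card_le_univ _).trans (by simp))
  let ι := {p : Finset (Fin n) × Finset (Fin n) // ∃ A, F A ∧ (f A, g A) = p}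
  have hsub : ∀ i : ι, i.1.1 ⊆ i.1.2 := by
    rintro ⟨_, A, hA, rfl⟩
    exact (h A hA).1.trans (h A hA).2.1
  have hFi : ∀ (i : ι) B, i.1.1 ⊆ B → B ⊆ i.1.2 → F B ∧ (f B, g B) = i.1 := by
    rintro ⟨_, A, hA, rfl⟩ B h1 h2
    obtain ⟨h3, h4, h5⟩ := (h A hA).2.2.2 B h1 h2
    exact ⟨h3, by simp [h4, h5]⟩
  refine ⟨ι, inferInstance, ⟨⟨_, ∅, hF, rfl⟩⟩,
    fun i => Finsupp.indicator i.1.1 (fun _ _ => 1), fun i => i.1.2, ⟨?_, ?_, ?_⟩, ?_⟩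
  · intro i
    rw [Submodule.disjoint_def]
    intro p hp hpI
    rw [mem_stanleySpace_iff _ _ (hsub i)] at hp
    rw [Submodule.restrictScalars_mem, hI] at hpI
    rw [← support_eq_empty, Finset.eq_empty_iff_forall_notMem]
    intro a ha
    exact hpI a ha (hFi i _ (hp a ha).1 (hp a ha).2).1
  · intro i
    rw [Submodule.disjoint_def]
    intro x hx hx'
    obtain ⟨p, hp, rfl⟩ := hx
    rw [SetLike.mem_coe, mem_stanleySpace_iff _ _ (hsub i)] at hp
    simp only [← Submodule.map_iSup] at hx'
    obtain ⟨q, hq, hqp⟩ := hx'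
    have hq' : q ∈ restrictSupport K
        {a : Fin n →₀ ℕ | ∃ j : ι, j ≠ i ∧ j.1.1 ⊆ a.support ∧ a.support ⊆ j.1.2} := by
      refine (?_ : (⨆ j, ⨆ (_ : j ≠ i), stanleySpace K
        (Finsupp.indicator j.1.1 (fun _ _ => 1)) (j.1.2 : Set (Fin n))) ≤ _) hq
      refine iSup_le fun j => iSup_le fun hj => ?_
      intro s hs
      rw [mem_stanleySpace_iff _ _ (hsub j)] at hs
      rw [mem_restrictSupport_iff]
      intro a ha
      exact ⟨j, hj, hs a ha⟩
    rw [mem_restrictSupport_iff] at hq'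
    have hmem : q - p ∈ I := by
      rw [← Ideal.Quotient.eq]
      exact hqp
    rw [hI] at hmem
    have : p = 0 := by
      rw [← support_eq_empty, Finset.eq_empty_iff_forall_notMem]
      intro a ha
      obtain ⟨h1, h2⟩ := hFi i _ (hp a ha).1 (hp a ha).2
      refine hmem a ?_ h1
      have haq : a ∉ q.support := by
        intro haq
        obtain ⟨j, hj, h3, h4⟩ := hq' haq
        apply hj
        apply Subtype.ext
        rw [← h2, (hFi j _ h3 h4).2]
      rw [notMem_support_iff] at haq
      rw [mem_support_iff] at ha ⊢
      simpa [haq] using ha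
    simp [this]
  · rw [← Submodule.map_iSup, eq_top_iff]
    intro x _
    obtain ⟨p, rfl⟩ := Ideal.Quotient.mk_surjective x
    rw [p.as_sum, map_sum]
    refine Submodule.sum_mem _ fun a _ => ?_
    by_cases ha : F a.support
    · refine ⟨monomial a (coeff a p), ?_, rfl⟩
      refine Submodule.mem_iSup_of_mem (⟨_, a.support, ha, rfl⟩ : ι) ?_
      rw [mem_stanleySpace_iff _ _ (hsub _)]
      intro b hb
      have : b = a := by simpa using support_monomial_subset hb
      subst this
      exact ⟨(h _ ha).1, (h _ ha).2.1⟩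
    · have : (monomial a (coeff a p) : MvPolynomial (Fin n) K) ∈ I := by
        rw [hI]
        intro b hb
        have : b = a := by simpa using support_monomial_subset hb
        subst this
        exact ha
      rw [Ideal.Quotient.eq_zero_iff_mem.2 this]
      exact Submodule.zero_mem _
  · rintro ⟨_, A, hA, rfl⟩
    exact (h A hA).2.2.1

end Alg

/-- **Lemma 2.5.** With `P_1, P_2, P_3` as in Corollary 2.2,
`sdepth S/I ≥ min(r + e, r + ⌈q/2⌉, ⌈e/2⌉ + ⌈q/2⌉)`. -/
theorem sdepth_quot_ge_three_disjoint_primes {K : Type*} [Field K] {r e q n : ℕ}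
    (hr : 0 < r) (hre : r ≤ e) (heq : e ≤ q) (hn : r + e + q = n)
    (P₁ P₂ P₃ I : Ideal (MvPolynomial (Fin n) K))
    (hP₁ : P₁ = Ideal.span
      ((fun j => (X j : MvPolynomial (Fin n) K)) '' {i : Fin n | (i : ℕ) < r}))
    (hP₂ : P₂ = Ideal.span
      ((fun j => (X j : MvPolynomial (Fin n) K)) '' {i : Fin n | r ≤ (i : ℕ) ∧ (i : ℕ) < r + e}))
    (hP₃ : P₃ = Ideal.span
      ((fun j => (X j : MvPolynomial (Fin n) K)) '' {i : Fin n | r + e ≤ (i : ℕ)}))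
    (hI : I = P₁ ⊓ P₂ ⊓ P₃) :
    min (r + e) (min (r + (q + 1) / 2) ((e + 1) / 2 + (q + 1) / 2)) ≤ sdepthQuot I := by
  classical
  have key : ∀ (s : Set (Fin n)) [DecidablePred (· ∈ s)], ∀ p : MvPolynomial (Fin n) K,
      p ∈ Ideal.span ((fun j => (X j : MvPolynomial (Fin n) K)) '' s) ↔
        ∀ a ∈ p.support, ¬ Disjoint a.support (Finset.univ.filter (· ∈ s)) := by
    intro s _ p
    refine (mem_ideal_span_X_image (x := p) (s := s)).trans ?_
    refine forall₂_congr fun a _ => ?_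
    rw [Finset.not_disjoint_iff]
    simp only [Finset.mem_filter, Finset.mem_univ, true_and, Finsupp.mem_support_iff]
    exact exists_congr fun i => and_comm
  have c1 : (Finset.univ.filter (· ∈ {i : Fin n | (i : ℕ) < r})).card = r := by
    rw [← Finset.card_map Fin.valEmbedding]
    convert Finset.card_range r using 2
    ext i
    simp only [Finset.mem_map, Finset.mem_filter, Finset.mem_univ, true_and, Set.mem_ofPred_eq,
      Fin.valEmbedding_apply, Finset.mem_range]
    exact ⟨by rintro ⟨j, hj, rfl⟩; exact hj, fun hi => ⟨⟨i, by omega⟩, hi, rfl⟩⟩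
  have c2 : (Finset.univ.filter (· ∈ {i : Fin n | r ≤ (i : ℕ) ∧ (i : ℕ) < r + e})).card = e := by
    rw [← Finset.card_map Fin.valEmbedding]
    have := Nat.card_Ico r (r + e)
    rw [Nat.add_sub_cancel_left] at this
    convert this using 2
    ext i
    simp only [Finset.mem_map, Finset.mem_filter, Finset.mem_univ, true_and, Set.mem_ofPred_eq,
      Fin.valEmbedding_apply, Finset.mem_Ico]
    exact ⟨by rintro ⟨j, hj, rfl⟩; exact hj, fun hi => ⟨⟨i, by omega⟩, hi, rfl⟩⟩
  have c3 : (Finset.univ.filter (· ∈ {i : Fin n | r + e ≤ (i : ℕ)})).card = q := by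
    rw [← Finset.card_map Fin.valEmbedding]
    have := Nat.card_Ico (r + e) (r + e + q)
    rw [Nat.add_sub_cancel_left] at this
    convert this using 2
    ext i
    simp only [Finset.mem_map, Finset.mem_filter, Finset.mem_univ, true_and, Set.mem_ofPred_eq,
      Fin.valEmbedding_apply, Finset.mem_Ico]
    exact ⟨by rintro ⟨j, hj, rfl⟩; exact ⟨hj, by omega⟩, fun hi => ⟨⟨i, by omega⟩, hi.1, rfl⟩⟩
  obtain ⟨f, g, h⟩ := three_blocks
    (Finset.univ.filter (· ∈ {i : Fin n | (i : ℕ) < r}))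
    (Finset.univ.filter (· ∈ {i : Fin n | r ≤ (i : ℕ) ∧ (i : ℕ) < r + e}))
    (Finset.univ.filter (· ∈ {i : Fin n | r + e ≤ (i : ℕ)}))
    (by rw [Finset.disjoint_left]; intro i; simp; omega)
    (by rw [Finset.disjoint_left]; intro i; simp; omega)
    (by rw [Finset.disjoint_left]; intro i; simp)
    (by intro i; simp; omega)
    (min (r + e) (min (r + (q + 1) / 2) ((e + 1) / 2 + (q + 1) / 2)))
    (by rw [c1, c2]; omega) (by rw [c1, c3]; omega) (by rw [c2, c3]; omega)
  refine le_sdepthQuot_of_partition I _ ?_ (by simp) _ f g h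
  intro p
  rw [hI, Ideal.mem_inf, Ideal.mem_inf, hP₁, hP₂, hP₃, key, key, key]
  simp only [not_or]
  exact ⟨fun H a ha => ⟨H.1.1 a ha, H.1.2 a ha, H.2 a ha⟩,
    fun H => ⟨⟨fun a ha => (H a ha).1, fun a ha => (H a ha).2.1⟩, fun a ha => (H a ha).2.2⟩⟩
end
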